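/- arXiv:1907.05455 — 3 statements merged into one kernel-verified Lean document; each statement's English description precedes it below -/
import Mathlib

section
/- Let {γ_z : z ∈ 𝔹_N} be a family of maps as in the Theorem on H_v^0 (each γ_z : b𝔹_N × [0,1] → cl(𝔹_N) is C¹, maps into 𝔹_N for r < 1, γ_z(x,1) = x with transversal approach, satisfies (†), with joint continuity in z). Let L be a compact subset of 𝔹_N and let h be a continuous function on 𝔹_N having a K-limit at almost every point of b𝔹_N. Then for every ε > 0 there exist a set E ⊆ b𝔹_N with m(b𝔹_N \ E) < ε and an extension h̃ of h to 𝔹_N ∪ E such that h̃ is continuous on E_L^* := {γ_z(x,r) : x ∈ E, r ∈ [0,1], z ∈ L}. -/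
open Set Filter Topology Metric MeasureTheory
open scoped ENNReal NNReal InnerProductSpace ComplexConjugate

noncomputable section

/-- `ℂ^N` with the Euclidean structure. -/
abbrev EN (N : ℕ) := EuclideanSpace ℂ (Fin N)

instance {N : ℕ} : MeasurableSpace (EN N) := borel _
instance {N : ℕ} : BorelSpace (EN N) := ⟨rfl⟩

/-- A domain: a nonempty open connected subset. -/
def IsDomainSet {N : ℕ} (D : Set (EN N)) : Prop := IsOpen D ∧ IsConnected D

/-- `u` is plurisubharmonic on `D`: upper semicontinuous on `D`, and its restriction to
every complex affine line satisfies the sub-mean value inequality on every closed disc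
(of that line) contained in `D`. -/
def PlurisubharmonicOn {N : ℕ} (u : EN N → ℝ) (D : Set (EN N)) : Prop :=
  UpperSemicontinuousOn u D ∧
  ∀ (a b : EN N) (t₀ : ℂ) (r : ℝ), 0 < r →
    (fun t : ℂ => a + t • b) '' Metric.closedBall t₀ r ⊆ D →
    u (a + t₀ • b) ≤ (2 * Real.pi)⁻¹ *
      ∫ θ in (0:ℝ)..(2 * Real.pi), u (a + (t₀ + r * Complex.exp (θ * Complex.I)) • b)

/-- `D` is a pseudoconvex domain: a domain carrying a continuous plurisubharmonic
exhaustion function. -/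
def Pseudoconvex {N : ℕ} (D : Set (EN N)) : Prop :=
  IsDomainSet D ∧ ∃ u : EN N → ℝ, ContinuousOn u D ∧ PlurisubharmonicOn u D ∧
    ∀ c : ℝ, IsCompact (closure {z ∈ D | u z < c}) ∧ closure {z ∈ D | u z < c} ⊆ D

/-- The space `𝒪(D)` of holomorphic functions on `D`, as a submodule of `ℂ^N → ℂ`. -/
def Hol {N : ℕ} (D : Set (EN N)) : Submodule ℂ (EN N → ℂ) where
  carrier := {f | DifferentiableOn ℂ f D}
  add_mem' hf hg := hf.add hg
  zero_mem' := differentiableOn_const 0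
  smul_mem' c f hf := hf.const_smul c

/-- The topology of uniform convergence on compact subsets of `D`, on `𝒪(D)`. -/
instance holTopology {N : ℕ} (D : Set (EN N)) : TopologicalSpace ↥(Hol D) :=
  TopologicalSpace.induced
    (fun f => UniformOnFun.ofFun {K : Set (EN N) | K ⊆ D ∧ IsCompact K} f.1)
    inferInstance

/-- A set is residual if it contains a dense `G_δ` set. -/
def ResidualIn {X : Type*} [TopologicalSpace X] (S : Set X) : Prop :=
  ∃ T : Set X, T ⊆ S ∧ IsGδ T ∧ Dense T

/-- `S` is densely lineable: `S ∪ {0}` contains a dense vector subspace. -/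
def DenselyLineableIn {X : Type*} [TopologicalSpace X] [AddCommMonoid X] [Module ℂ X]
    (S : Set X) : Prop :=
  ∃ p : Submodule ℂ X, Dense (p : Set X) ∧ (p : Set X) ⊆ S ∪ {0}

/-- `S` is spaceable: `S ∪ {0}` contains a closed infinite-dimensional vector subspace. -/
def SpaceableIn {X : Type*} [TopologicalSpace X] [AddCommMonoid X] [Module ℂ X]
    (S : Set X) : Prop :=
  ∃ p : Submodule ℂ X, IsClosed (p : Set X) ∧ ¬ Module.Finite ℂ ↥p ∧ (p : Set X) ⊆ S ∪ {0}

/-- A finite length path to `bD`: continuous and piecewise `C¹` on `[0,1)`, with values in `D`,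
finite length (total variation), converging to a boundary point of `D` as `r → 1`. -/
def FiniteLengthPathTo {N : ℕ} (D : Set (EN N)) (γ : ℝ → EN N) : Prop :=
  MapsTo γ (Ico (0:ℝ) 1) D ∧ ContinuousOn γ (Ico (0:ℝ) 1) ∧
  (∃ u : ℕ → ℝ, u 0 = 0 ∧ StrictMono u ∧ (∀ n, u n < 1) ∧ Tendsto u atTop (𝓝 1) ∧
    ∀ n, ContDiffOn ℝ 1 γ (Icc (u n) (u (n+1)))) ∧
  eVariationOn γ (Ico (0:ℝ) 1) < ⊤ ∧
  ∃ ζ ∈ frontier D, Tendsto γ (𝓝[<] (1:ℝ)) (𝓝 ζ)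

/-- The set of `f ∈ 𝒪(D)` with maximal cluster set along every finite length path to `bD`. -/
def WildSet {N : ℕ} (D : Set (EN N)) : Set ↥(Hol D) :=
  {f | ∀ γ : ℝ → EN N, FiniteLengthPathTo D γ → ∀ c : ℂ,
    ∃ r : ℕ → ℝ, (∀ n, r n ∈ Ico (0:ℝ) 1) ∧ Tendsto r atTop (𝓝 1) ∧
      Tendsto (fun n => f.1 (γ (r n))) atTop (𝓝 c)}

/-- The `𝒪(D)`-hull of `K`. -/
def holHull {N : ℕ} (D K : Set (EN N)) : Set (EN N) :=
  {z ∈ D | ∀ φ : EN N → ℂ, DifferentiableOn ℂ φ D → ‖φ z‖ ≤ ⨆ w ∈ K, ‖φ w‖}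

/-- `K` is `𝒪(D)`-convex. -/
def HolConvexIn {N : ℕ} (D K : Set (EN N)) : Prop := K ⊆ D ∧ holHull D K = K

/-- The polynomial hull of a compact subset of `ℂ`. -/
def polyHull1 (E : Set ℂ) : Set ℂ :=
  {z | ∀ p : Polynomial ℂ, ‖p.eval z‖ ≤ ⨆ w ∈ E, ‖p.eval w‖}

/-- The polynomial hull of a subset of `ℂ^N`. -/
def polyHull {N : ℕ} (E : Set (EN N)) : Set (EN N) :=
  {z | ∀ p : MvPolynomial (Fin N) ℂ,
    ‖MvPolynomial.eval (fun j => z j) p‖ ≤ ⨆ w ∈ E, ‖MvPolynomial.eval (fun j => w j) p‖}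

/-- `E ⊆ ℂ^N` is polynomially convex. -/
def PolynomiallyConvex {N : ℕ} (E : Set (EN N)) : Prop := polyHull E = E

/-- The (real) Hessian of `ρ` at `p`, applied to the pair `(v, w)`. -/
def Hess {N : ℕ} (ρ : EN N → ℝ) (p v w : EN N) : ℝ :=
  fderiv ℝ (fderiv ℝ ρ) p v w

/-- The Levi form `∑_{j,k} ∂²ρ/∂z_j∂z̄_k (p) w_j w̄_k`, expressed through the real Hessian. -/
def LeviForm {N : ℕ} (ρ : EN N → ℝ) (p w : EN N) : ℝ :=
  (Hess ρ p w w + Hess ρ p (Complex.I • w) (Complex.I • w)) / 4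

/-- `w` belongs to the complex tangent space `{w : ∑_j ∂ρ/∂z_j(p) w_j = 0}` at `p`. -/
def ComplexTangent {N : ℕ} (ρ : EN N → ℝ) (p w : EN N) : Prop :=
  fderiv ℝ ρ p w = 0 ∧ fderiv ℝ ρ p (Complex.I • w) = 0

/-- `ρ` is a `C²` defining function for `D` on the open neighborhood `V` of `cl D`. -/
def IsDefiningFunctionOn {N : ℕ} (D : Set (EN N)) (ρ : EN N → ℝ) (V : Set (EN N)) : Prop :=
  IsOpen V ∧ closure D ⊆ V ∧ ContDiffOn ℝ 2 ρ V ∧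
  D = {z ∈ V | ρ z < 0} ∧ ∀ p ∈ frontier D, fderiv ℝ ρ p ≠ 0

/-- `D` is a strictly pseudoconvex domain with defining function `ρ`. -/
def StrictPSCWith {N : ℕ} (D : Set (EN N)) (ρ : EN N → ℝ) : Prop :=
  IsDomainSet D ∧ Bornology.IsBounded D ∧ (∃ V, IsDefiningFunctionOn D ρ V) ∧
  ∀ p ∈ frontier D, ∀ w : EN N, w ≠ 0 → ComplexTangent ρ p w → 0 < LeviForm ρ p w

/-- `D` is a strictly pseudoconvex domain. -/
def StrictlyPseudoconvex {N : ℕ} (D : Set (EN N)) : Prop := ∃ ρ, StrictPSCWith D ρ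

/-- `ρ` and `σ` are at `C²`-distance `< ε` on `V`. -/
def C2DistLt {N : ℕ} (V : Set (EN N)) (ρ σ : EN N → ℝ) (ε : ℝ) : Prop :=
  ∀ z ∈ V, |ρ z - σ z| + ‖fderiv ℝ ρ z - fderiv ℝ σ z‖ +
    ‖fderiv ℝ (fderiv ℝ ρ) z - fderiv ℝ (fderiv ℝ σ) z‖ < ε

/-- The standing assumptions on the map `γ : bD × [0,1] → cl D`: it is `C^k`, maps
`bD × [0,1)` into `D`, satisfies `γ(x,1) = x`, and the curves `r ↦ γ(x,r)` hit `bD`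
transversally at `x` (the `r`-derivative at `1` is not annihilated by `dρ(x)`,
i.e. it is not tangent to `bD` at `x`). -/
def GammaMap {N : ℕ} (D : Set (EN N)) (ρ : EN N → ℝ) (γ : EN N × ℝ → EN N) (k : ℕ) : Prop :=
  ContDiffOn ℝ k γ ((frontier D) ×ˢ Icc (0:ℝ) 1) ∧
  (∀ x ∈ frontier D, ∀ r ∈ Ico (0:ℝ) 1, γ (x, r) ∈ D) ∧
  (∀ x ∈ frontier D, γ (x, 1) = x) ∧
  ∀ x ∈ frontier D, fderiv ℝ ρ x (derivWithin (fun r => γ (x, r)) (Icc (0:ℝ) 1) 1) ≠ 0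

/-- Assumption (†): for all `r` close enough to `1`, `bD_r := γ(bD × {r})` bounds a strictly
pseudoconvex domain `D_r ⊆ D` whose defining function converges to `ρ` in `C²` norm on a
neighborhood `V` of `cl D` as `r → 1`. -/
def Dagger {N : ℕ} (D : Set (EN N)) (ρ : EN N → ℝ) (γ : EN N × ℝ → EN N) : Prop :=
  ∃ V : Set (EN N), IsOpen V ∧ closure D ⊆ V ∧
  ∃ (Dr : ℝ → Set (EN N)) (ρr : ℝ → EN N → ℝ),
    ∀ ε > 0, ∃ r₀ ∈ Ico (0:ℝ) 1, ∀ r ∈ Ioo r₀ 1,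
      StrictPSCWith (Dr r) (ρr r) ∧ Dr r ⊆ D ∧
      frontier (Dr r) = (fun x => γ (x, r)) '' frontier D ∧
      C2DistLt V (ρr r) ρ ε

/-- The `(2N-1)`-dimensional Hausdorff (surface) measure on `bD`. -/
def surfMeasure {N : ℕ} (D : Set (EN N)) : Measure (EN N) :=
  (Measure.hausdorffMeasure (2 * (N:ℝ) - 1)).restrict (frontier D)

/-- The normalized surface measure on `bD`. -/
def surfMeasureNorm {N : ℕ} (D : Set (EN N)) : Measure (EN N) :=
  ((Measure.hausdorffMeasure (2 * (N:ℝ) - 1) : Measure (EN N)) (frontier D))⁻¹ • surfMeasure D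

/-- The set `𝒲((r_j))` of `f ∈ 𝒪(D)` such that every measurable function on `bD` is an
a.e. limit of `f ∘ γ(·, r_{j_k})` along some subsequence of `(r_j)`. -/
def WSet {N : ℕ} (D : Set (EN N)) (γ : EN N × ℝ → EN N) (r : ℕ → ℝ) : Set ↥(Hol D) :=
  {f | ∀ h : EN N → ℂ, Measurable h → ∃ φ : ℕ → ℕ, StrictMono φ ∧
    ∀ᵐ x ∂ surfMeasure D, Tendsto (fun k => f.1 (γ (x, r (φ k)))) atTop (𝓝 (h x))}

/-- `Γ` is a closed cap of a convex set `V`: the closure of a connected component of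
`V \ H` for some real affine hyperplane `H` (for convex `V`, a nonempty open half-space
slice of `V`). -/
def IsClosedCap {N : ℕ} (V : Set (EN N)) (Γ : Set (EN N)) : Prop :=
  ∃ (l : EN N →L[ℝ] ℝ) (c : ℝ), l ≠ 0 ∧ (V ∩ {z | c < l z}).Nonempty ∧
    Γ = closure (V ∩ {z | c < l z})

/-- `V` is a strictly convex domain: a bounded convex domain with `C²` boundary whose
defining function has positive definite real Hessian on the real tangent space. -/
def StrictlyConvexDomain {N : ℕ} (V : Set (EN N)) : Prop :=
  IsDomainSet V ∧ Bornology.IsBounded V ∧ Convex ℝ V ∧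
  ∃ (ρ : EN N → ℝ) (W : Set (EN N)), IsDefiningFunctionOn V ρ W ∧
    ∀ p ∈ frontier V, ∀ w : EN N, w ≠ 0 → fderiv ℝ ρ p w = 0 → 0 < Hess ρ p w w

/-- The defining function `‖z‖² - 1` of the unit ball. -/
def ballRho {N : ℕ} : EN N → ℝ := fun z => ‖z‖ ^ 2 - 1

/-- The normalized surface measure on the unit sphere of `ℂ^N`. -/
def sphMeasure (N : ℕ) : Measure (EN N) :=
  ((Measure.hausdorffMeasure (2 * (N:ℝ) - 1) : Measure (EN N)) (Metric.sphere 0 1))⁻¹ •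
    (Measure.hausdorffMeasure (2 * (N:ℝ) - 1)).restrict (Metric.sphere 0 1)

/-- `v` is a weight: increasing on `[0,∞)`, nonnegative, and tending to `∞`. -/
def IsWeight (v : ℝ → ℝ) : Prop :=
  (∀ x ∈ Ici (0:ℝ), 0 ≤ v x) ∧ MonotoneOn v (Ici 0) ∧ Tendsto v atTop atTop

/-- The norm `‖f‖ = sup_{z ∈ 𝔹_N} |f z| / v(|z|)` of `H_v^0`. -/
def hvNorm {N : ℕ} (v : ℝ → ℝ) (f : EN N → ℂ) : ℝ :=
  ⨆ z ∈ Metric.ball (0:EN N) 1, ‖f z‖ / v ‖z‖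

/-- Membership in `H_v^0`: `f` is holomorphic on `𝔹_N` and `sup_{|z|=r} |f z| / v(r) → 0`
as `r → 1⁻`. -/
def MemHv {N : ℕ} (v : ℝ → ℝ) (f : EN N → ℂ) : Prop :=
  DifferentiableOn ℂ f (Metric.ball 0 1) ∧
  Tendsto (fun r : ℝ => ⨆ z ∈ Metric.sphere (0:EN N) r, ‖f z‖ / v r) (𝓝[<] 1) (𝓝 0)

/-- `S` contains, relatively to `H_v^0` with its norm topology, a dense `G_δ` subset:
there are countably many relatively norm-open sets `U n` whose intersection with `H_v^0`
is norm-dense in `H_v^0` and contained in `S`. -/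
def ResidualInHv {N : ℕ} (v : ℝ → ℝ) (S : Set (EN N → ℂ)) : Prop :=
  ∃ U : ℕ → Set (EN N → ℂ),
    (∀ n, ∀ f, MemHv v f → f ∈ U n →
      ∃ δ > 0, ∀ g, MemHv v g → hvNorm v (g - f) < δ → g ∈ U n) ∧
    (∀ f, MemHv v f → ∀ δ > 0, ∃ g, MemHv v g ∧ (∀ n, g ∈ U n) ∧ hvNorm v (g - f) < δ) ∧
    ∀ f, MemHv v f → (∀ n, f ∈ U n) → f ∈ S

/-- `S` is densely lineable in `H_v^0`: `S ∪ {0}` contains a norm-dense subspace of `H_v^0`. -/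
def DenselyLineableInHv {N : ℕ} (v : ℝ → ℝ) (S : Set (EN N → ℂ)) : Prop :=
  ∃ p : Submodule ℂ (EN N → ℂ), (↑p ⊆ {f : EN N → ℂ | MemHv v f}) ∧ (↑p ⊆ S ∪ {0}) ∧
    ∀ f, MemHv v f → ∀ δ > 0, ∃ g ∈ p, hvNorm v (g - f) < δ

/-- `S` is spaceable in `H_v^0`: `S ∪ {0}` contains a norm-closed infinite-dimensional
subspace of `H_v^0`. -/
def SpaceableInHv {N : ℕ} (v : ℝ → ℝ) (S : Set (EN N → ℂ)) : Prop :=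
  ∃ p : Submodule ℂ (EN N → ℂ), (↑p ⊆ {f : EN N → ℂ | MemHv v f}) ∧ (↑p ⊆ S ∪ {0}) ∧
    ¬ Module.Finite ℂ ↥p ∧
    ∀ f, MemHv v f → (∀ δ > 0, ∃ g ∈ p, hvNorm v (g - f) < δ) → f ∈ p

/-- The standing assumptions on the family `{γ_z : z ∈ 𝔹_N}`: each `γ_z` is a `C¹` map
`b𝔹_N × [0,1] → cl 𝔹_N` into `𝔹_N` for `r < 1` with `γ_z(x,1) = x`, transversal approach
and (†), with joint continuity of `(z,x,r) ↦ γ_z(x,r)` and of `(z,r) ↦ ∂γ_z(x,r)/∂r`. -/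
def BallGammaFamily {N : ℕ} (γ : EN N → EN N × ℝ → EN N) : Prop :=
  (∀ z ∈ Metric.ball (0:EN N) 1,
    GammaMap (Metric.ball 0 1) ballRho (γ z) 1 ∧ Dagger (Metric.ball 0 1) ballRho (γ z)) ∧
  ContinuousOn (fun p : EN N × (EN N × ℝ) => γ p.1 p.2)
    (Metric.ball 0 1 ×ˢ (Metric.sphere 0 1 ×ˢ Icc (0:ℝ) 1)) ∧
  ∀ x ∈ Metric.sphere (0:EN N) 1,
    ContinuousOn (fun p : EN N × ℝ => derivWithin (fun r => γ p.1 (x, r)) (Icc (0:ℝ) 1) p.2)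
      (Metric.ball 0 1 ×ˢ Icc (0:ℝ) 1)

/-- The set of `f` such that for every `z ∈ 𝔹_N`, every measurable function on `b𝔹_N` is an
a.e. limit of `f ∘ γ_z(·, r_{j_k})` along some subsequence of `(r_j)`. -/
def WSetHv {N : ℕ} (γ : EN N → EN N × ℝ → EN N) (r : ℕ → ℝ) : Set (EN N → ℂ) :=
  {f | ∀ z ∈ Metric.ball (0:EN N) 1, ∀ h : EN N → ℂ, Measurable h →
    ∃ φ : ℕ → ℕ, StrictMono φ ∧
      ∀ᵐ x ∂ sphMeasure N, Tendsto (fun k => f (γ z (x, r (φ k)))) atTop (𝓝 (h x))}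

/-- The set `E_L^* = {γ_z(x,r) : x ∈ E, r ∈ [0,1], z ∈ L}`. -/
def EStarSet {N : ℕ} (γ : EN N → EN N × ℝ → EN N) (L E : Set (EN N)) : Set (EN N) :=
  {w | ∃ z ∈ L, ∃ x ∈ E, ∃ r ∈ Icc (0:ℝ) 1, w = γ z (x, r)}

/-- The Korányi approach region `D_α(x)`. -/
def Koranyi {N : ℕ} (α : ℝ) (x : EN N) : Set (EN N) :=
  {z ∈ Metric.ball (0:EN N) 1 | ‖1 - (⟪x, z⟫_ℂ : ℂ)‖ < α / 2 * (1 - ‖z‖ ^ 2)}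

/-- `h` has a `K`-limit at `x`: for every `α > 1` the values of `h` converge along every
sequence in `D_α(x)` converging to `x`. -/
def HasKLimitAt {N : ℕ} (h : EN N → ℂ) (x : EN N) : Prop :=
  ∀ α > (1:ℝ), ∃ c : ℂ, ∀ z : ℕ → EN N, (∀ i, z i ∈ Koranyi α x) →
    Tendsto z atTop (𝓝 x) → Tendsto (fun i => h (z i)) atTop (𝓝 c)

/-- The circle `bL_x = L_x ∩ b𝔹_N` cut out on the complex line through `x` and `0`. -/
def lineCircle {N : ℕ} (x : EN N) : Set (EN N) :=
  {z | ∃ t : ℂ, z = t • x} ∩ Metric.sphere 0 1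

end

/-!
Transversality and compactness of `L` confine all the curves `r ↦ γ_z(x, r)`, `z ∈ L`, ending at a
given `x` to one nontangential cone, hence to one Korányi region at `x`, whose aperture depends on
`x`; off a set of small measure a single aperture `α` serves for all `x`. By Egorov's argument `h`
tends to its `K`-limit through `D_α(x)` uniformly in `x`, off a further set of small measure. Such a
uniform limit is continuous on `E` and fits together continuously with `h` on `⋃_{x ∈ E} D_α(x)`,
because points of `D_α(x)` that are close to the sphere are close to `x`.
-/

section ApproachRegions

variable {X Y : Type*} [PseudoMetricSpace X] [PseudoMetricSpace Y] {D : X → Set X} {h g : X → Y}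
  {E : Set X}

/-- The points `x` at which the oscillation of `h` over the part of the approach region `D x`
within distance `d` of `x` is at most `δ`. -/
def oscSet (D : X → Set X) (h : X → Y) (d δ : ℝ) : Set X :=
  {x | ∀ z ∈ D x ∩ ball x d, ∀ w ∈ D x ∩ ball x d, dist (h z) (h w) ≤ δ}

/-- `h z` tends to `g x` as `z → x` within the approach region `D x`, uniformly in `x ∈ E`. -/
def TendstoUniformlyThrough (D : X → Set X) (h g : X → Y) (E : Set X) : Prop :=
  ∀ δ > 0, ∃ d > 0, ∀ x ∈ E, ∀ z ∈ D x ∩ ball x d, dist (h z) (g x) ≤ δ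

lemma TendstoUniformlyThrough.mono {E' : Set X} (hu : TendstoUniformlyThrough D h g E)
    (hE : E' ⊆ E) : TendstoUniformlyThrough D h g E' :=
  fun δ hδ => (hu δ hδ).imp fun _ hd => ⟨hd.1, fun x hx => hd.2 x (hE hx)⟩

lemma isOpen_setOfPred_mem_inter_ball (hD : ∀ z, IsOpen {x | z ∈ D x}) (z : X) (d : ℝ) :
    IsOpen {x | z ∈ D x ∩ ball x d} :=
  (hD z).inter (isOpen_lt (by fun_prop : Continuous fun x => dist z x) continuous_const)

lemma isClosed_oscSet (hD : ∀ z, IsOpen {x | z ∈ D x}) (d δ : ℝ) : IsClosed (oscSet D h d δ) := by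
  simp only [oscSet, ofPred_forall (p := fun _ _ : X => _ → _)]
  refine isClosed_iInter fun z => isClosed_imp (isOpen_setOfPred_mem_inter_ball hD z d) ?_
  simp only [ofPred_forall (p := fun _ _ : X => _ → _)]
  exact isClosed_iInter fun w =>
    isClosed_imp (isOpen_setOfPred_mem_inter_ball hD w d) isClosed_const

lemma oscSet_antitone_radius (δ : ℝ) : Antitone fun d => oscSet D h d δ :=
  fun _ _ hd _ hx z hz w hw =>
    hx z ⟨hz.1, ball_subset_ball hd hz.2⟩ w ⟨hw.1, ball_subset_ball hd hw.2⟩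

lemma exists_mem_oscSet_of_tendsto {x : X} {c : Y} (hc : Tendsto h (𝓝[D x] x) (𝓝 c)) {δ : ℝ}
    (hδ : 0 < δ) : ∃ n : ℕ, x ∈ oscSet D h (1 / (n + 1)) δ := by
  obtain ⟨d, hd, hdc⟩ := mem_nhdsWithin_iff.1 (hc (closedBall_mem_nhds c (half_pos hδ)))
  obtain ⟨n, hn⟩ := exists_nat_one_div_lt hd
  refine ⟨n, oscSet_antitone_radius δ hn.le fun z hz w hw => ?_⟩
  linarith [dist_triangle_right (h z) (h w) c, mem_closedBall.1 (hdc hz.symm),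
    mem_closedBall.1 (hdc hw.symm)]

lemma dist_le_of_mem_oscSet {x z : X} {c : Y} [(𝓝[D x] x).NeBot]
    (hc : Tendsto h (𝓝[D x] x) (𝓝 c)) {d δ : ℝ} (hd : 0 < d) (hx : x ∈ oscSet D h d δ)
    (hz : z ∈ D x ∩ ball x d) : dist (h z) c ≤ δ := by
  refine le_of_tendsto (tendsto_const_nhds.dist hc) ?_
  filter_upwards [self_mem_nhdsWithin, mem_nhdsWithin_of_mem_nhds (ball_mem_nhds x hd)]
    with w hwD hwd using hx z hz w ⟨hwD, hwd⟩

lemma exists_measure_compl_lt_of_monotone {α : Type*} [MeasurableSpace α] {μ : Measure α}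
    [IsFiniteMeasure μ] {s : ℕ → Set α} (hs : ∀ n, MeasurableSet (s n)) (hmono : Monotone s)
    (hcover : ∀ᵐ x ∂μ, ∃ n, x ∈ s n) {ε : ℝ≥0∞} (hε : ε ≠ 0) : ∃ n, μ (s n)ᶜ < ε := by
  have hlim := tendsto_measure_iInter_atTop (μ := μ) (fun n => (hs n).compl.nullMeasurableSet)
    (fun _ _ hmn => compl_subset_compl.2 (hmono hmn)) ⟨0, measure_ne_top μ _⟩
  have hnull : μ (⋂ n, (s n)ᶜ) = 0 := by
    simp_rw [← mem_iUnion] at hcover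
    rwa [← compl_iUnion]
  rw [hnull] at hlim
  exact (hlim.eventually (gt_mem_nhds hε.bot_lt)).exists

/- Egorov's argument. Openness of `{x | z ∈ D x}` makes the oscillation sets closed, which is what
replaces the measurability of the functions in Egorov's theorem. -/
theorem exists_tendstoUniformlyThrough_of_ae [MeasurableSpace X] [OpensMeasurableSpace X]
    {μ : Measure X} [IsFiniteMeasure μ] (hD : ∀ z, IsOpen {x | z ∈ D x})
    (hlim : ∀ᵐ x ∂μ, (𝓝[D x] x).NeBot ∧ Tendsto h (𝓝[D x] x) (𝓝 (g x))) {ε : ℝ≥0∞}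
    (hε : ε ≠ 0) : ∃ E, μ Eᶜ < ε ∧ TendstoUniformlyThrough D h g E := by
  obtain ⟨ε', hε'pos, hε'sum⟩ := ENNReal.exists_pos_sum_of_countable' hε ℕ
  have hosc (j : ℕ) : ∃ n : ℕ, μ (oscSet D h (1 / (n + 1)) (1 / (j + 1)))ᶜ < ε' j := by
    refine exists_measure_compl_lt_of_monotone
      (fun n => (isClosed_oscSet hD _ _).measurableSet)
      ((oscSet_antitone_radius _).comp fun m n hmn => Nat.one_div_le_one_div hmn) ?_
      (hε'pos j).ne'
    filter_upwards [hlim] with x hx using exists_mem_oscSet_of_tendsto hx.2 Nat.one_div_pos_of_nat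
  choose n hn using hosc
  set C := {x | (𝓝[D x] x).NeBot ∧ Tendsto h (𝓝[D x] x) (𝓝 (g x))}
  set G : ℕ → Set X := fun j => oscSet D h (1 / (n j + 1)) (1 / (j + 1))
  refine ⟨C ∩ ⋂ j, G j, ?_, fun δ hδ => ?_⟩
  · calc μ (C ∩ ⋂ j, G j)ᶜ ≤ μ Cᶜ + ∑' j, μ (G j)ᶜ := by
          rw [compl_inter, compl_iInter]
          exact (measure_union_le _ _).trans (by gcongr; exact measure_iUnion_le _)
      _ = ∑' j, μ (G j)ᶜ := by rw [show μ Cᶜ = 0 from hlim, zero_add]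
      _ ≤ ∑' j, ε' j := ENNReal.tsum_le_tsum fun j => (hn j).le
      _ < ε := hε'sum
  · obtain ⟨j, hj⟩ := exists_nat_one_div_lt hδ
    refine ⟨1 / (n j + 1), Nat.one_div_pos_of_nat, fun x hx z hz => ?_⟩
    have := hx.1.1
    exact (dist_le_of_mem_oscSet hx.1.2 Nat.one_div_pos_of_nat (mem_iInter.1 hx.2 j) hz).trans hj.le

/- A single point `z ∈ D x₀` close to `x₀` also lies in `D x` for all `x` near `x₀`, so `h z` is
close to both `g x₀` and `g x`. -/
lemma TendstoUniformlyThrough.continuousOn (hu : TendstoUniformlyThrough D h g E)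
    (hD : ∀ z, IsOpen {x | z ∈ D x}) (hne : ∀ x ∈ E, (𝓝[D x] x).NeBot) : ContinuousOn g E := by
  intro x₀ hx₀
  refine Metric.continuousWithinAt_iff'.2 fun ε hε => ?_
  obtain ⟨d, hd, hu⟩ := hu (ε / 3) (by positivity)
  have := hne x₀ hx₀
  obtain ⟨z, hz⟩ : (D x₀ ∩ ball x₀ d).Nonempty :=
    nonempty_of_mem <|
      inter_mem self_mem_nhdsWithin (mem_nhdsWithin_of_mem_nhds (ball_mem_nhds _ hd))
  filter_upwards [self_mem_nhdsWithin, mem_nhdsWithin_of_mem_nhds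
    ((isOpen_setOfPred_mem_inter_ball hD z d).mem_nhds hz)] with x hx hzx
  linarith [dist_triangle_left (g x) (g x₀) (h z), hu x hx z hzx, hu x₀ hx₀ z hz]

open Classical in
theorem TendstoUniformlyThrough.continuousOn_piecewise (hu : TendstoUniformlyThrough D h g E)
    (hD : ∀ z, IsOpen {x | z ∈ D x}) (hne : ∀ x ∈ E, (𝓝[D x] x).NeBot) {B : Set X}
    (hB : IsOpen B) (hh : ContinuousOn h B) (hEB : Disjoint E B) (hDB : ∀ x ∈ E, D x ⊆ B)
    (hshrink : ∀ x₀ ∈ E, ∀ η > 0, ∀ᶠ w in 𝓝 x₀, ∀ x ∈ E, w ∈ D x → dist w x < η) :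
    ContinuousOn (B.piecewise h g) (E ∪ ⋃ x ∈ E, D x) := by
  have hpiece_E : EqOn (B.piecewise h g) g E :=
    (B.piecewise_eqOn_compl h g).mono hEB.subset_compl_right
  rintro w₀ (hw₀ | hw₀)
  · have hg := hu.continuousOn hD hne w₀ hw₀
    refine (hg.congr hpiece_E (hpiece_E hw₀)).union <|
      Metric.continuousWithinAt_iff'.2 fun ε hε => ?_
    rw [hpiece_E hw₀]
    obtain ⟨d, hd, hu⟩ := hu (ε / 2) (by positivity)
    obtain ⟨r, hr, hgr⟩ := Metric.continuousWithinAt_iff.1 hg (ε / 2) (by positivity)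
    filter_upwards [self_mem_nhdsWithin,
      mem_nhdsWithin_of_mem_nhds (ball_mem_nhds w₀ (half_pos hr)),
      mem_nhdsWithin_of_mem_nhds (hshrink w₀ hw₀ (min d (r / 2)) (by positivity))] with w hw hwr hwD
    obtain ⟨x, hx, hwx⟩ := mem_iUnion₂.1 hw
    obtain ⟨hxd, hxr⟩ := lt_min_iff.1 (hwD x hx hwx)
    have hxw₀ : dist x w₀ < r := by linarith [dist_triangle_left x w₀ w, mem_ball.1 hwr]
    rw [B.piecewise_eq_of_mem h g (hDB x hx hwx)]
    linarith [dist_triangle (h w) (g x) (g w₀), hu x hx w ⟨hwx, hxd⟩, hgr hx hxw₀]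
  · obtain ⟨x, hx, hwx⟩ := mem_iUnion₂.1 hw₀
    have hBw₀ := hB.mem_nhds (hDB x hx hwx)
    exact ((hh.continuousAt hBw₀).congr
      ((B.piecewise_eqOn h g).symm.eventuallyEq_of_mem hBw₀)).continuousWithinAt

end ApproachRegions

section UnitSphere

variable {𝕜 E : Type*} [RCLike 𝕜] [NormedAddCommGroup E] [InnerProductSpace 𝕜 E] {x : E}

lemma norm_one_sub_inner_le_norm_sub (hx : ‖x‖ = 1) (w : E) : ‖1 - inner 𝕜 x w‖ ≤ ‖x - w‖ := by
  have hxx : inner 𝕜 x x = 1 := by simp [inner_self_eq_norm_sq_to_K, hx]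
  simpa [inner_sub_right, hxx, hx] using norm_inner_le_norm (𝕜 := 𝕜) x (x - w)

lemma norm_sub_sq_le_two_mul_norm_one_sub_inner (hx : ‖x‖ = 1) {w : E} (hw : ‖w‖ ≤ 1) :
    ‖x - w‖ ^ 2 ≤ 2 * ‖1 - inner 𝕜 x w‖ := by
  have hre : 1 - RCLike.re (inner 𝕜 x w) ≤ ‖1 - inner 𝕜 x w‖ := by
    simpa using RCLike.re_le_norm (1 - inner 𝕜 x w)
  rw [norm_sub_sq (𝕜 := 𝕜), hx]
  linarith [pow_le_one₀ (n := 2) (norm_nonneg w) hw]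

end UnitSphere

section Koranyi

variable {N : ℕ} {α : ℝ}

lemma Koranyi_subset_ball (x : EN N) : Koranyi α x ⊆ ball 0 1 := fun _ hz => hz.1

lemma isOpen_setOfPred_mem_Koranyi (z : EN N) : IsOpen {x | z ∈ Koranyi α x} :=
  (isOpen_const (p := z ∈ ball (0 : EN N) 1)).inter
    (isOpen_lt (f := fun x : EN N => ‖1 - ⟪x, z⟫_ℂ‖) (by fun_prop) continuous_const)

lemma nhdsWithin_Koranyi_neBot (hα : 1 < α) {x : EN N} (hx : ‖x‖ = 1) :
    (𝓝[Koranyi α x] x).NeBot := by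
  have hradial : Tendsto (fun t : ℝ => (t : ℂ) • x) (𝓝[<] 1) (𝓝 x) := by
    have : Continuous fun t : ℝ => (t : ℂ) • x := by fun_prop
    simpa using (this.tendsto 1).mono_left nhdsWithin_le_nhds
  have haperture : ∀ᶠ t : ℝ in 𝓝[<] 1, 1 < α / 2 * (1 + t) := by
    have : Continuous fun t : ℝ => α / 2 * (1 + t) := by fun_prop
    exact nhdsWithin_le_nhds (this.continuousAt.eventually (lt_mem_nhds (by linarith)))
  refine mem_closure_iff_nhdsWithin_neBot.1 (mem_closure_of_tendsto hradial ?_)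
  filter_upwards [haperture, Ioo_mem_nhdsLT zero_lt_one] with t hαt ht
  have hnorm : ‖(t : ℂ) • x‖ = t := by simp [norm_smul, hx, abs_of_pos ht.1]
  have hinner : ‖1 - ⟪x, (t : ℂ) • x⟫_ℂ‖ = 1 - t := by
    rw [inner_smul_right, inner_self_eq_norm_sq_to_K, hx]
    simpa [abs_of_pos (sub_pos.2 ht.2)] using Complex.norm_real (1 - t)
  refine ⟨mem_ball_zero_iff.2 (hnorm.trans_lt ht.2), ?_⟩
  rw [hinner, hnorm]
  nlinarith [mul_pos (sub_pos.2 ht.2) (sub_pos.2 hαt)]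

lemma norm_sub_sq_lt_of_mem_Koranyi {x w : EN N} (hx : ‖x‖ = 1) (hw : w ∈ Koranyi α x) :
    ‖x - w‖ ^ 2 < α * (1 - ‖w‖ ^ 2) := by
  have := norm_sub_sq_le_two_mul_norm_one_sub_inner (𝕜 := ℂ) hx (mem_ball_zero_iff.1 hw.1).le
  linarith [hw.2]

lemma eventually_dist_lt_of_mem_Koranyi {x₀ : EN N} (hx₀ : ‖x₀‖ = 1) {η : ℝ} (hη : 0 < η) :
    ∀ᶠ w in 𝓝 x₀, ∀ x : EN N, ‖x‖ = 1 → w ∈ Koranyi α x → dist w x < η := by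
  have hcont : Continuous fun w : EN N => α * (1 - ‖w‖ ^ 2) := by fun_prop
  have hzero : α * (1 - ‖x₀‖ ^ 2) < η ^ 2 := by simpa [hx₀] using pow_pos hη 2
  filter_upwards [hcont.continuousAt.eventually (gt_mem_nhds hzero)] with w hw x hx hwx
  rw [dist_comm, dist_eq_norm]
  exact lt_of_pow_lt_pow_left₀ 2 hη.le ((norm_sub_sq_lt_of_mem_Koranyi hx hwx).trans hw)

lemma mem_Koranyi_of_norm_sub_le {x w : EN N} {k : ℝ} (hx : ‖x‖ = 1) (hw : w ∈ ball (0 : EN N) 1)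
    (hkα : 2 * k < α) (hxw : ‖x - w‖ ≤ k * (1 - ‖w‖ ^ 2)) : w ∈ Koranyi α x := by
  have hpos : 0 < 1 - ‖w‖ ^ 2 :=
    sub_pos.2 (pow_lt_one₀ (norm_nonneg w) (mem_ball_zero_iff.1 hw) two_ne_zero)
  exact ⟨hw, ((norm_one_sub_inner_le_norm_sub hx w).trans hxw).trans_lt (by gcongr; linarith)⟩

lemma HasKLimitAt.exists_tendsto {h : EN N → ℂ} {x : EN N} (hK : HasKLimitAt h x) (hα : 1 < α) :
    ∃ c, Tendsto h (𝓝[Koranyi α x] x) (𝓝 c) := by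
  obtain ⟨c, hc⟩ := hK α hα
  refine ⟨c, tendsto_of_seq_tendsto fun u hu => ?_⟩
  obtain ⟨hux, huK⟩ := tendsto_nhdsWithin_iff.1 hu
  obtain ⟨n, hn⟩ := eventually_atTop.1 huK
  exact (tendsto_add_atTop_iff_nat n).1 <|
    hc (fun i => u (i + n)) (fun i => hn _ (Nat.le_add_left n i))
      (hux.comp (tendsto_add_atTop_nat n))

theorem exists_extension_continuousOn_Koranyi {μ : Measure (EN N)} [IsFiniteMeasure μ]
    (hα : 1 < α) {h : EN N → ℂ} (hh : ContinuousOn h (ball 0 1))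
    (hK : ∀ᵐ x ∂μ.restrict (sphere 0 1), HasKLimitAt h x) {ε : ℝ≥0∞} (hε : ε ≠ 0) :
    ∃ E ⊆ sphere (0 : EN N) 1, μ (sphere 0 1 \ E) < ε ∧
      ∃ ht : EN N → ℂ, EqOn ht h (ball 0 1) ∧ ContinuousOn ht (E ∪ ⋃ x ∈ E, Koranyi α x) := by
  classical
  set g : EN N → ℂ := fun x => limUnder (𝓝[Koranyi α x] x) h
  have hlim : ∀ᵐ x ∂μ.restrict (sphere 0 1),
      (𝓝[Koranyi α x] x).NeBot ∧ Tendsto h (𝓝[Koranyi α x] x) (𝓝 (g x)) := by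
    filter_upwards [hK, ae_restrict_mem isClosed_sphere.measurableSet] with x hx hxS
    exact ⟨nhdsWithin_Koranyi_neBot hα (mem_sphere_zero_iff_norm.1 hxS),
      tendsto_nhds_limUnder (hx.exists_tendsto hα)⟩
  obtain ⟨E₀, hE₀, hu⟩ := exists_tendstoUniformlyThrough_of_ae isOpen_setOfPred_mem_Koranyi hlim hε
  have hnorm (x) (hx : x ∈ E₀ ∩ sphere 0 1) : ‖x‖ = 1 := mem_sphere_zero_iff_norm.1 hx.2
  refine ⟨E₀ ∩ sphere 0 1, inter_subset_right, ?_, (ball 0 1).piecewise h g,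
    piecewise_eqOn _ _ _, (hu.mono inter_subset_left).continuousOn_piecewise
      isOpen_setOfPred_mem_Koranyi
      (fun x hx => nhdsWithin_Koranyi_neBot hα (hnorm x hx)) isOpen_ball hh
      (sphere_disjoint_ball.mono_left inter_subset_right) (fun x _ => Koranyi_subset_ball x)
      fun x₀ hx₀ η hη => ?_⟩
  · rwa [sdiff_inter_self_eq_sdiff, sdiff_eq, inter_comm,
      ← Measure.restrict_apply' isClosed_sphere.measurableSet]
  · filter_upwards [eventually_dist_lt_of_mem_Koranyi (α := α) (hnorm x₀ hx₀) hη]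
      with w hw x hx using hw x (hnorm x hx)

end Koranyi

section DerivativeAtRightEndpoint

lemma nonneg_of_hasDerivWithinAt_Icc_right_of_isMaxOn {f : ℝ → ℝ} {f' a b : ℝ} (hab : a < b)
    (hf : HasDerivWithinAt f f' (Icc a b) b) (hmax : IsMaxOn f (Icc a b) b) : 0 ≤ f' := by
  have hcone : a - b ∈ posTangentConeAt (Icc a b) b :=
    mem_posTangentConeAt_of_segment_subset
      (by rw [add_sub_cancel, segment_symm, segment_eq_Icc hab.le])
  have := hmax.localize.hasFDerivWithinAt_nonpos hf.hasFDerivWithinAt hcone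
  simp only [ContinuousLinearMap.toSpanSingleton_apply, smul_eq_mul] at this
  nlinarith

variable {Z : Type*} [TopologicalSpace Z] {L : Set Z}

lemma exists_pos_lt_near_one (hL : IsCompact L) {f : Z → ℝ → ℝ}
    (hf : ContinuousOn (fun p : Z × ℝ => f p.1 p.2) (L ×ˢ Icc 0 1)) (hpos : ∀ z ∈ L, 0 < f z 1) :
    ∃ a > 0, ∃ r₀ ∈ Ico (0 : ℝ) 1, ∀ z ∈ L, ∀ r ∈ Ioc r₀ 1, a < f z r := by
  have h1 : (1 : ℝ) ∈ Icc (0 : ℝ) 1 := right_mem_Icc.2 zero_le_one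
  have hf1 : ContinuousOn (fun z => f z 1) L :=
    hf.comp (f := fun z => (z, (1 : ℝ))) (by fun_prop) fun z hz => ⟨hz, h1⟩
  obtain ⟨b, hb, hbf⟩ := hL.exists_forall_le' hf1 hpos
  have hnear : ∀ᶠ r in 𝓝 (1 : ℝ), ∀ z ∈ L, z ∈ L → r ∈ Icc (0 : ℝ) 1 → b / 2 < f z r := by
    refine hL.eventually_forall_of_forall_eventually fun z hz => ?_
    have := (hf (z, 1) ⟨hz, h1⟩).eventually (lt_mem_nhds ((half_lt_self hb).trans_le (hbf z hz)))
    filter_upwards [(continuous_swap.tendsto ((1 : ℝ), z)).eventually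
      (eventually_nhdsWithin_iff.1 this)] with p hp hz hr using hp ⟨hz, hr⟩
  obtain ⟨r₀, hr₀, hsub⟩ := (mem_nhdsLE_iff_exists_mem_Ico_Ioc_subset (zero_lt_one' ℝ)).1
    (mem_nhdsWithin_of_mem_nhds hnear)
  exact ⟨b / 2, half_pos hb, r₀, hr₀, fun z hz r hr =>
    hsub hr z hz hz ⟨hr₀.1.trans hr.1.le, hr.2⟩⟩

lemma exists_pos_mul_one_sub_le_sub (hL : IsCompact L) {f f' : Z → ℝ → ℝ}
    (hf : ∀ z ∈ L, ∀ r ∈ Icc (0 : ℝ) 1, HasDerivWithinAt (f z) (f' z r) (Icc 0 1) r)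
    (hfc : ContinuousOn (fun p : Z × ℝ => f p.1 p.2) (L ×ˢ Icc 0 1))
    (hf'c : ContinuousOn (fun p : Z × ℝ => f' p.1 p.2) (L ×ˢ Icc 0 1))
    (hlt : ∀ z ∈ L, ∀ r ∈ Ico (0 : ℝ) 1, f z r < f z 1) (hpos : ∀ z ∈ L, 0 < f' z 1) :
    ∃ m > 0, ∀ z ∈ L, ∀ r ∈ Icc (0 : ℝ) 1, m * (1 - r) ≤ f z 1 - f z r := by
  obtain ⟨a, ha, r₀, hr₀, hnear⟩ := exists_pos_lt_near_one hL hf'c hpos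
  have hdiff : ContinuousOn (fun p : Z × ℝ => f p.1 1 - f p.1 p.2) (L ×ˢ Icc 0 r₀) :=
    (hfc.comp (f := fun p : Z × ℝ => (p.1, (1 : ℝ))) (by fun_prop)
      fun p hp => ⟨hp.1, right_mem_Icc.2 zero_le_one⟩).sub
      (hfc.mono (prod_mono_right (Icc_subset_Icc_right hr₀.2.le)))
  obtain ⟨b, hb, hfar⟩ := (hL.prod isCompact_Icc).exists_forall_le' hdiff
    fun p hp => sub_pos.2 (hlt p.1 hp.1 p.2 ⟨hp.2.1, hp.2.2.trans_lt hr₀.2⟩)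
  refine ⟨min a b, lt_min ha hb, fun z hz r hr => ?_⟩
  rcases le_or_gt r r₀ with hrr₀ | hrr₀
  · calc min a b * (1 - r) ≤ b * 1 := by
          gcongr
          · linarith [hr.2]
          · exact min_le_right a b
          · linarith [hr.1]
      _ ≤ f z 1 - f z r := by simpa using hfar (z, r) ⟨hz, hr.1, hrr₀⟩
  · have hsub : Icc r 1 ⊆ Icc 0 1 := Icc_subset_Icc_left hr.1
    have hderiv (s) (hs : s ∈ interior (Icc r 1)) : HasDerivAt (f z) (f' z s) s :=
      ((hf z hz s (hsub (interior_subset hs))).mono hsub).hasDerivAt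
        (mem_interior_iff_mem_nhds.1 hs)
    refine (convex_Icc r 1).mul_sub_le_image_sub_of_le_deriv
      (fun s hs => ((hf z hz s (hsub hs)).mono hsub).continuousWithinAt)
      (fun s hs => (hderiv s hs).differentiableAt.differentiableWithinAt) (fun s hs => ?_)
      r (left_mem_Icc.2 hr.2) 1 (right_mem_Icc.2 hr.2) hr.2
    rw [(hderiv s hs).deriv]
    have hs' := interior_subset hs
    exact (min_le_left a b).trans (hnear z hz s ⟨hrr₀.trans_le hs'.1, hs'.2⟩).le

end DerivativeAtRightEndpoint

section TransversalFamily

variable {Z E : Type*} [TopologicalSpace Z] [NormedAddCommGroup E] [InnerProductSpace ℝ E]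

/-- A family of curves `r ↦ γ z (x, r)`, `z ∈ L`, running inside the open unit ball to the point
`x` of the unit sphere, which they reach at `r = 1` transversally to the sphere. The speed of a
curve is its derivative within `[0, 1]`. -/
structure IsTransversalFamilyOn (γ : Z → E × ℝ → E) (L : Set Z) : Prop where
  mem_ball : ∀ z ∈ L, ∀ x ∈ sphere (0 : E) 1, ∀ r ∈ Ico (0 : ℝ) 1, γ z (x, r) ∈ ball (0 : E) 1
  apply_one : ∀ z ∈ L, ∀ x ∈ sphere (0 : E) 1, γ z (x, 1) = x
  differentiableOn : ∀ z ∈ L, ∀ x ∈ sphere (0 : E) 1,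
    DifferentiableOn ℝ (fun r => γ z (x, r)) (Icc 0 1)
  transversal : ∀ z ∈ L, ∀ x ∈ sphere (0 : E) 1,
    ⟪x, derivWithin (fun r => γ z (x, r)) (Icc 0 1) 1⟫_ℝ ≠ 0
  continuousOn : ContinuousOn (fun p : Z × E × ℝ => γ p.1 p.2) (L ×ˢ sphere 0 1 ×ˢ Icc 0 1)
  continuousOn_derivWithin : ∀ x ∈ sphere (0 : E) 1,
    ContinuousOn (fun p : Z × ℝ => derivWithin (fun r => γ p.1 (x, r)) (Icc 0 1) p.2)
      (L ×ˢ Icc 0 1)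

/-- The points `x` of the unit sphere at which all the curves `r ↦ γ z (x, r)`, `z ∈ L`, stay in
the nontangential cone `{w | ‖x - w‖ ≤ k * (1 - ‖w‖ ^ 2)}`. -/
def apertureSet (γ : Z → E × ℝ → E) (L : Set Z) (k : ℝ) : Set E :=
  {x ∈ sphere 0 1 | ∀ z ∈ L, ∀ r ∈ Icc (0 : ℝ) 1,
    ‖x - γ z (x, r)‖ ≤ k * (1 - ‖γ z (x, r)‖ ^ 2)}

namespace IsTransversalFamilyOn

variable {γ : Z → E × ℝ → E} {L : Set Z} {x : E}

lemma norm_sq_lt_one (hγ : IsTransversalFamilyOn γ L) {z : Z} (hz : z ∈ L)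
    (hx : x ∈ sphere (0 : E) 1) {r : ℝ} (hr : r ∈ Ico (0 : ℝ) 1) : ‖γ z (x, r)‖ ^ 2 < 1 :=
  pow_lt_one₀ (norm_nonneg _) (mem_ball_zero_iff.1 (hγ.mem_ball z hz x hx r hr)) two_ne_zero

lemma norm_sq_apply_one (hγ : IsTransversalFamilyOn γ L) {z : Z} (hz : z ∈ L)
    (hx : x ∈ sphere (0 : E) 1) : ‖γ z (x, 1)‖ ^ 2 = 1 := by
  rw [hγ.apply_one z hz x hx, mem_sphere_zero_iff_norm.1 hx, one_pow]

lemma norm_sq_le_one (hγ : IsTransversalFamilyOn γ L) {z : Z} (hz : z ∈ L)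
    (hx : x ∈ sphere (0 : E) 1) {r : ℝ} (hr : r ∈ Icc (0 : ℝ) 1) : ‖γ z (x, r)‖ ^ 2 ≤ 1 := by
  rcases hr.2.lt_or_eq with hr1 | rfl
  · exact (hγ.norm_sq_lt_one hz hx ⟨hr.1, hr1⟩).le
  · exact (hγ.norm_sq_apply_one hz hx).le

lemma hasDerivWithinAt (hγ : IsTransversalFamilyOn γ L) {z : Z} (hz : z ∈ L)
    (hx : x ∈ sphere (0 : E) 1) {r : ℝ} (hr : r ∈ Icc (0 : ℝ) 1) :
    HasDerivWithinAt (fun r => γ z (x, r)) (derivWithin (fun r => γ z (x, r)) (Icc 0 1) r)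
      (Icc 0 1) r :=
  (hγ.differentiableOn z hz x hx r hr).hasDerivWithinAt

lemma inner_derivWithin_pos (hγ : IsTransversalFamilyOn γ L) {z : Z} (hz : z ∈ L)
    (hx : x ∈ sphere (0 : E) 1) : 0 < ⟪x, derivWithin (fun r => γ z (x, r)) (Icc 0 1) 1⟫_ℝ := by
  have hderiv := (hγ.hasDerivWithinAt hz hx (right_mem_Icc.2 zero_le_one)).norm_sq
  have hmax : IsMaxOn (fun r => ‖γ z (x, r)‖ ^ 2) (Icc 0 1) 1 := fun r hr =>
    (hγ.norm_sq_le_one hz hx hr).trans_eq (hγ.norm_sq_apply_one hz hx).symm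
  have hnonneg := nonneg_of_hasDerivWithinAt_Icc_right_of_isMaxOn zero_lt_one hderiv hmax
  rw [hγ.apply_one z hz x hx] at hnonneg
  exact (nonneg_of_mul_nonneg_right hnonneg two_pos).lt_of_ne' (hγ.transversal z hz x hx)

lemma continuousOn_curves (hγ : IsTransversalFamilyOn γ L) (hx : x ∈ sphere (0 : E) 1) :
    ContinuousOn (fun p : Z × ℝ => γ p.1 (x, p.2)) (L ×ˢ Icc 0 1) :=
  hγ.continuousOn.comp (f := fun p : Z × ℝ => (p.1, x, p.2)) (by fun_prop)
    fun _ hp => ⟨hp.1, hx, hp.2⟩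

lemma exists_norm_sub_le_mul_one_sub (hγ : IsTransversalFamilyOn γ L) (hL : IsCompact L)
    (hx : x ∈ sphere (0 : E) 1) :
    ∃ M, ∀ z ∈ L, ∀ r ∈ Icc (0 : ℝ) 1, ‖x - γ z (x, r)‖ ≤ M * (1 - r) := by
  obtain ⟨M, hM⟩ := (hL.prod isCompact_Icc).exists_bound_of_continuousOn
    (hγ.continuousOn_derivWithin x hx)
  refine ⟨M, fun z hz r hr => ?_⟩
  have := (convex_Icc (0 : ℝ) 1).norm_image_sub_le_of_norm_hasDerivWithin_le
    (fun s hs => hγ.hasDerivWithinAt hz hx hs) (fun s hs => hM (z, s) ⟨hz, hs⟩) hr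
    (right_mem_Icc.2 zero_le_one)
  rwa [hγ.apply_one z hz x hx, Real.norm_of_nonneg (sub_nonneg.2 hr.2)] at this

lemma exists_pos_mul_one_sub_le (hγ : IsTransversalFamilyOn γ L) (hL : IsCompact L)
    (hx : x ∈ sphere (0 : E) 1) :
    ∃ m > 0, ∀ z ∈ L, ∀ r ∈ Icc (0 : ℝ) 1, m * (1 - r) ≤ 1 - ‖γ z (x, r)‖ ^ 2 := by
  have hcurves := hγ.continuousOn_curves hx
  obtain ⟨m, hm, hbound⟩ := exists_pos_mul_one_sub_le_sub hL
    (f := fun z r => ‖γ z (x, r)‖ ^ 2)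
    (fun z hz r hr => (hγ.hasDerivWithinAt hz hx hr).norm_sq) (hcurves.norm.pow 2)
    (continuousOn_const.mul (hcurves.inner (𝕜 := ℝ) (hγ.continuousOn_derivWithin x hx)))
    (fun z hz r hr =>
      (hγ.norm_sq_lt_one hz hx hr).trans_eq (hγ.norm_sq_apply_one hz hx).symm)
    (fun z hz => by
      rw [hγ.apply_one z hz x hx]
      exact mul_pos two_pos (hγ.inner_derivWithin_pos hz hx))
  refine ⟨m, hm, fun z hz r hr => ?_⟩
  simpa only [hγ.norm_sq_apply_one hz hx] using hbound z hz r hr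

lemma exists_mem_apertureSet (hγ : IsTransversalFamilyOn γ L) (hL : IsCompact L)
    (hx : x ∈ sphere (0 : E) 1) : ∃ k : ℕ, x ∈ apertureSet γ L k := by
  obtain ⟨M, hM⟩ := hγ.exists_norm_sub_le_mul_one_sub hL hx
  obtain ⟨m, hm, hbound⟩ := hγ.exists_pos_mul_one_sub_le hL hx
  refine ⟨⌈|M| / m⌉₊, hx, fun z hz r hr => ?_⟩
  have hr1 : 0 ≤ 1 - r := sub_nonneg.2 hr.2
  calc ‖x - γ z (x, r)‖ ≤ |M| * (1 - r) := (hM z hz r hr).trans (by gcongr; exact le_abs_self M)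
    _ = |M| / m * (m * (1 - r)) := by field_simp
    _ ≤ ⌈|M| / m⌉₊ * (1 - ‖γ z (x, r)‖ ^ 2) := by
      gcongr
      · exact Nat.le_ceil _
      · exact hbound z hz r hr

lemma apertureSet_mono (hγ : IsTransversalFamilyOn γ L) : Monotone (apertureSet γ L) :=
  fun _ _ hkl _ hx => ⟨hx.1, fun z hz r hr => (hx.2 z hz r hr).trans <|
    mul_le_mul_of_nonneg_right hkl (sub_nonneg.2 (hγ.norm_sq_le_one hz hx.1 hr))⟩

lemma isClosed_apertureSet (hγ : IsTransversalFamilyOn γ L) (k : ℝ) :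
    IsClosed (apertureSet γ L k) := by
  have hinter : apertureSet γ L k = sphere 0 1 ∩ ⋂ z ∈ L, ⋂ r ∈ Icc (0 : ℝ) 1,
      {x ∈ sphere 0 1 | ‖x - γ z (x, r)‖ ≤ k * (1 - ‖γ z (x, r)‖ ^ 2)} := by
    ext x
    simp only [apertureSet, mem_ofPred_eq, mem_inter_iff, mem_iInter]
    grind
  rw [hinter]
  refine isClosed_sphere.inter (isClosed_biInter fun z hz => isClosed_biInter fun r hr => ?_)
  have hcont : ContinuousOn (fun x => γ z (x, r)) (sphere 0 1) :=
    hγ.continuousOn.comp (f := fun x => (z, x, r)) (by fun_prop) fun _ hx => ⟨hz, hx, hr⟩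
  exact isClosed_sphere.isClosed_le (continuousOn_id.sub hcont).norm
    (continuousOn_const.mul (continuousOn_const.sub (hcont.norm.pow 2)))

theorem exists_measure_sphere_sdiff_apertureSet_lt [MeasurableSpace E] [OpensMeasurableSpace E]
    {μ : Measure E} [IsFiniteMeasure μ] (hγ : IsTransversalFamilyOn γ L) (hL : IsCompact L)
    {ε : ℝ≥0∞} (hε : ε ≠ 0) : ∃ k : ℕ, μ (sphere 0 1 \ apertureSet γ L k) < ε := by
  have hcover : ∀ᵐ x ∂μ.restrict (sphere 0 1), ∃ k : ℕ, x ∈ apertureSet γ L k := by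
    filter_upwards [ae_restrict_mem isClosed_sphere.measurableSet] with x hx
      using hγ.exists_mem_apertureSet hL hx
  obtain ⟨k, hk⟩ := exists_measure_compl_lt_of_monotone
    (fun n : ℕ => (hγ.isClosed_apertureSet n).measurableSet)
    (hγ.apertureSet_mono.comp Nat.mono_cast) hcover hε
  exact ⟨k, by rwa [sdiff_eq, inter_comm,
    ← Measure.restrict_apply' isClosed_sphere.measurableSet]⟩

end IsTransversalFamilyOn

end TransversalFamily

section Extension

variable {N : ℕ} {Z : Type*} {L : Set Z}

lemma IsTransversalFamilyOn.subset_union_Koranyi [TopologicalSpace Z] {γ : Z → EN N × ℝ → EN N}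
    (hγ : IsTransversalFamilyOn γ L) {k α : ℝ} (hkα : 2 * k < α) {E : Set (EN N)}
    (hE : E ⊆ apertureSet γ L k) :
    {w | ∃ z ∈ L, ∃ x ∈ E, ∃ r ∈ Icc (0 : ℝ) 1, w = γ z (x, r)} ⊆ E ∪ ⋃ x ∈ E, Koranyi α x := by
  rintro _ ⟨z, hz, x, hx, r, hr, rfl⟩
  have hxS := (hE hx).1
  rcases hr.2.lt_or_eq with hr1 | rfl
  · exact Or.inr (mem_iUnion₂.2 ⟨x, hx, mem_Koranyi_of_norm_sub_le (mem_sphere_zero_iff_norm.1 hxS)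
      (hγ.mem_ball z hz x hxS r ⟨hr.1, hr1⟩) hkα ((hE hx).2 z hz r hr)⟩)
  · exact Or.inl (by rwa [hγ.apply_one z hz x hxS])

lemma fderiv_ballRho (x v : EN N) : fderiv ℝ ballRho x v = 2 * ⟪x, v⟫_ℝ := by
  have : HasFDerivAt (ballRho (N := N)) (2 • innerSL ℝ x) x :=
    (hasStrictFDerivAt_norm_sq x).hasFDerivAt.sub_const 1
  simp [this.fderiv]

lemma BallGammaFamily.isTransversalFamilyOn {γ : EN N → EN N × ℝ → EN N}
    (hγ : BallGammaFamily γ) {L : Set (EN N)} (hL : L ⊆ ball 0 1) : IsTransversalFamilyOn γ L := by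
  obtain ⟨hmaps, hcont, hderiv⟩ := hγ
  simp only [GammaMap, frontier_ball (0 : EN N) one_ne_zero, fderiv_ballRho] at hmaps
  refine ⟨fun z hz => (hmaps z (hL hz)).1.2.1, fun z hz => (hmaps z (hL hz)).1.2.2.1,
    fun z hz x hx => ?_, fun z hz x hx => right_ne_zero_of_mul ((hmaps z (hL hz)).1.2.2.2 x hx),
    hcont.mono (prod_mono_left hL), fun x hx => (hderiv x hx).mono (prod_mono_left hL)⟩
  exact ((hmaps z (hL hz)).1.1.differentiableOn (by simp)).comp
    (f := fun r : ℝ => (x, r)) (by fun_prop) fun r hr => ⟨hx, hr⟩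

instance isFiniteMeasure_sphMeasure : IsFiniteMeasure (sphMeasure N) := by
  refine ⟨lt_of_le_of_lt ?_ ENNReal.one_lt_top⟩
  simp [sphMeasure, ENNReal.inv_mul_le_one]

lemma sphMeasure_restrict_sphere : (sphMeasure N).restrict (sphere 0 1) = sphMeasure N := by
  rw [sphMeasure, Measure.restrict_smul,
    Measure.restrict_restrict isClosed_sphere.measurableSet, inter_self]

theorem klimit_extension_general [TopologicalSpace Z] {γ : Z → EN N × ℝ → EN N}
    (hL : IsCompact L) (hγ : IsTransversalFamilyOn γ L) {μ : Measure (EN N)} [IsFiniteMeasure μ]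
    {h : EN N → ℂ} (hh : ContinuousOn h (ball 0 1))
    (hK : ∀ᵐ x ∂μ.restrict (sphere 0 1), HasKLimitAt h x) {ε : ℝ≥0∞} (hε : ε ≠ 0) :
    ∃ E ⊆ sphere (0 : EN N) 1, μ (sphere 0 1 \ E) < ε ∧
      ∃ ht : EN N → ℂ, (∀ z ∈ ball (0 : EN N) 1, ht z = h z) ∧
        ContinuousOn ht {w | ∃ z ∈ L, ∃ x ∈ E, ∃ r ∈ Icc (0 : ℝ) 1, w = γ z (x, r)} := by
  have hε2 : ε / 2 ≠ 0 := (ENNReal.half_pos hε).ne'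
  obtain ⟨k, hk⟩ := hγ.exists_measure_sphere_sdiff_apertureSet_lt (μ := μ) hL hε2
  obtain ⟨E, hES, hE, ht, hth, htc⟩ :=
    exists_extension_continuousOn_Koranyi (α := 2 * k + 2) (by linarith [k.cast_nonneg (α := ℝ)])
      hh hK hε2
  refine ⟨E ∩ apertureSet γ L k, inter_subset_left.trans hES, ?_, ht, hth, htc.mono ?_⟩
  · calc μ (sphere 0 1 \ (E ∩ apertureSet γ L k))
        ≤ μ (sphere 0 1 \ E) + μ (sphere 0 1 \ apertureSet γ L k) := by
          rw [sdiff_inter]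
          exact measure_union_le _ _
      _ < ε / 2 + ε / 2 := ENNReal.add_lt_add hE hk
      _ = ε := ENNReal.add_halves ε
  · refine (hγ.subset_union_Koranyi (lt_add_of_pos_right _ two_pos) inter_subset_right).trans ?_
    exact union_subset_union inter_subset_left (biUnion_subset_biUnion_left inter_subset_left)

end Extension

/-- **Extension lemma.** Let `{γ_z}` be a family of maps as above, `L ⊆ 𝔹_N` compact, and
`h` continuous on `𝔹_N` with a `K`-limit at almost every point of `b𝔹_N`. Then for every
`ε > 0` there are `E ⊆ b𝔹_N` with `m(b𝔹_N \ E) < ε` and an extension `h̃` of `h` to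
`𝔹_N ∪ E` that is continuous on `E_L^* = {γ_z(x,r) : x ∈ E, r ∈ [0,1], z ∈ L}`. -/
theorem klimit_extension {N : ℕ} (hN : 2 ≤ N) (γ : EN N → EN N × ℝ → EN N)
    (hγ : BallGammaFamily γ)
    (L : Set (EN N)) (hL : IsCompact L) (hLb : L ⊆ Metric.ball (0:EN N) 1)
    (h : EN N → ℂ) (hh : ContinuousOn h (Metric.ball 0 1))
    (hKlim : ∀ᵐ x ∂ sphMeasure N, HasKLimitAt h x) (ε : ℝ) (hε : 0 < ε) :
    ∃ E ⊆ Metric.sphere (0:EN N) 1,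
      sphMeasure N (Metric.sphere (0:EN N) 1 \ E) < ENNReal.ofReal ε ∧
      ∃ ht : EN N → ℂ, (∀ z ∈ Metric.ball (0:EN N) 1, ht z = h z) ∧
        ContinuousOn ht (EStarSet γ L E) := by
  exact klimit_extension_general hL (hγ.isTransversalFamilyOn hLb) hh
    (by rwa [sphMeasure_restrict_sphere]) (ENNReal.ofReal_pos.2 hε).ne'
end

section
/- Let K and L be two compact convex subsets of ℂ^N whose intersection consists of a single point. Suppose there exists a complex-linear functional φ on ℂ^N such that Re φ ≤ 0 on K, Re φ ≥ 0 on L, and the set {z : Re φ(z) = 0} meets K only in a single point. Then K ∪ L is polynomially convex. -/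
open Set Filter Topology Metric MeasureTheory
open scoped ENNReal NNReal InnerProductSpace ComplexConjugate

/-!
Put `z` in the hull of `K ∪ L` and suppose `Re f z < 0`. On the union of `f '' (insert z K)` and
`f '' L` there are polynomials in one variable that are close to `1` on the part of the first set
away from the imaginary axis and close to `0` on the second, while staying bounded near the axis.
Composed with `f` they give cutoffs `g`, and if some polynomial `p` had `|p z| > sup_K |p|`, the
products `p ^ n * g` would contradict the choice of `z`; so `z` is in the hull of `K`. For
`0 ≤ Re f z` the cutoffs `1 - g` put `z` in the hull of `L` together with the point of `K` on the
axis, and adding a point to a compact set preserves polynomial convexity.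

The one-variable cutoffs approximate powers of a function of `√(1 + v²)` which is holomorphic off
two slits of the imaginary axis. Since `f '' K` meets the axis at most once, a small translation
moves both sets off the slits. Runge's theorem is replaced by the fact that in a closed subalgebra
of `C(X, ℂ)`, elements with values in the slit plane `ℂ ∖ (-∞, 0]` have inverses, hence logarithms
and square roots.
-/

section ClosedSubalgebra

variable {X : Type*} [TopologicalSpace X] [CompactSpace X] {A : Subalgebra ℂ C(X, ℂ)}
  {g : C(X, ℂ)}

theorem not_isBounded_ofReal_image_Iic :
    ¬ Bornology.IsBounded ((fun t : ℝ => (t : ℂ)) '' Iic 0) := by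
  intro h
  obtain ⟨R, hR⟩ := h.exists_norm_le
  have hlarge := hR _ ⟨-(|R| + 1), mem_Iic.2 (neg_nonpos.2 (by positivity)), rfl⟩
  rw [Complex.norm_real, norm_neg, Real.norm_of_nonneg (by positivity)] at hlarge
  linarith [le_abs_self R]

-- Relative to `A` the spectrum of `g` can only grow by filling in bounded components of the
-- complement of its range, and `0` lies in an unbounded one.
theorem exists_mem_forall_eq_inv (hA : IsClosed (A : Set C(X, ℂ))) (hg : g ∈ A)
    (hgs : ∀ x, g x ∈ Complex.slitPlane) : ∃ k ∈ A, ∀ x, k x = (g x)⁻¹ := by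
  have hunit : (0 : ℂ) ∉ spectrum ℂ (⟨g, hg⟩ : A) := by
    intro h
    have := hA
    refine not_isBounded_ofReal_image_Iic
      ((Subalgebra.spectrum_isBounded_connectedComponentIn A ⟨g, hg⟩ h).subset ?_)
    refine IsPreconnected.subset_connectedComponentIn
      (isPreconnected_Iic.image _ Complex.continuous_ofReal.continuousOn)
      ⟨0, by simp, by simp⟩ ?_
    rintro _ ⟨t, ht, rfl⟩
    rw [ContinuousMap.spectrum_eq_range]
    rintro ⟨x, hx⟩
    have hxs := hgs x
    rw [show g x = t from hx, Complex.ofReal_mem_slitPlane] at hxs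
    exact ht.not_gt hxs
  obtain ⟨u, hu⟩ := spectrum.zero_notMem_iff ℂ |>.1 hunit
  refine ⟨((u⁻¹ : Aˣ) : A), Subtype.property _, fun x => eq_inv_of_mul_eq_one_right ?_⟩
  have hmul : (⟨g, hg⟩ : A) * ((u⁻¹ : Aˣ) : A) = 1 := hu ▸ u.mul_inv
  exact congrArg (fun f : A => (f : C(X, ℂ)) x) hmul

theorem one_add_smul_sub_one_mem_slitPlane {z : ℂ} (hz : z ∈ Complex.slitPlane)
    (t : unitInterval) : 1 + (t : ℝ) • (z - 1) ∈ Complex.slitPlane :=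
  StarConvex.add_smul_mem Complex.starConvex_one_slitPlane (by simpa using hz) t.2.1 t.2.2

theorem log_eq_integral_unitInterval {z : ℂ} (hz : z ∈ Complex.slitPlane) :
    Complex.log z = (z - 1) * ∫ t : unitInterval, (1 + (t : ℝ) • (z - 1))⁻¹ := by
  have h := Complex.log_eq_integral (z := z - 1) (by simpa using hz)
  rw [add_sub_cancel] at h
  rw [h, intervalIntegral.integral_of_le zero_le_one, ← integral_Icc_eq_integral_Ioc]
  exact congrArg _ (integral_subtype measurableSet_Icc fun t : ℝ => (1 + t • (z - 1))⁻¹).symm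

theorem integral_mem_of_isClosed (hA : IsClosed (A : Set C(X, ℂ)))
    {Φ : C(unitInterval, C(X, ℂ))} (hΦ : ∀ t, Φ t ∈ A) : ∫ t, Φ t ∈ A :=
  (A.toSubmodule.restrictScalars ℝ).convex.integral_mem hA (Eventually.of_forall hΦ)
    (Φ.continuous.integrable_of_hasCompactSupport (HasCompactSupport.of_compactSpace _))

theorem integral_continuousMap_apply (Φ : C(unitInterval, C(X, ℂ))) (x : X) :
    (∫ t, Φ t) x = ∫ t, Φ t x :=
  ((ContinuousMap.evalCLM ℂ x).integral_comp_comm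
    (Φ.continuous.integrable_of_hasCompactSupport (HasCompactSupport.of_compactSpace _))).symm

theorem exists_mem_forall_eq_log (hA : IsClosed (A : Set C(X, ℂ))) (hg : g ∈ A)
    (hgs : ∀ x, g x ∈ Complex.slitPlane) : ∃ k ∈ A, ∀ x, k x = Complex.log (g x) := by
  let J : C(unitInterval × X, ℂ) :=
    ⟨fun q => (1 + (q.1 : ℝ) • (g q.2 - 1))⁻¹, Continuous.inv₀ (by fun_prop) fun q =>
      Complex.slitPlane_ne_zero (one_add_smul_sub_one_mem_slitPlane (hgs q.2) q.1)⟩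
  have hJ : ∀ t, J.curry t ∈ A := by
    intro t
    obtain ⟨k, hkA, hk⟩ := exists_mem_forall_eq_inv hA
      (A.add_mem A.one_mem (A.smul_mem (A.sub_mem hg A.one_mem) ((t : ℝ) : ℂ)))
      fun x => by simpa using one_add_smul_sub_one_mem_slitPlane (hgs x) t
    convert hkA
    ext x
    simp [hk, J]
  refine ⟨(g - 1) * ∫ t, J.curry t,
    A.mul_mem (A.sub_mem hg A.one_mem) (integral_mem_of_isClosed hA hJ), fun x => ?_⟩
  rw [log_eq_integral_unitInterval (hgs x), ContinuousMap.mul_apply, integral_continuousMap_apply]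
  rfl

theorem exists_mem_forall_eq_exp (hA : IsClosed (A : Set C(X, ℂ))) (hg : g ∈ A) :
    ∃ k ∈ A, ∀ x, k x = Complex.exp (g x) := by
  refine ⟨NormedSpace.exp g, NormedSpace.exp_mem (s := A) hA hg, fun x => ?_⟩
  rw [Complex.exp_eq_exp_ℂ]
  exact NormedSpace.map_exp (ContinuousMap.evalAlgHom ℂ ℂ x : C(X, ℂ) →ₐ[ℂ] ℂ)
    (continuous_eval_const x) g

theorem exists_mem_forall_eq_sqrt (hA : IsClosed (A : Set C(X, ℂ))) (hg : g ∈ A)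
    (hgs : ∀ x, g x ∈ Complex.slitPlane) : ∃ k ∈ A, ∀ x, k x = Complex.sqrt (g x) := by
  obtain ⟨l, hlA, hl⟩ := exists_mem_forall_eq_log hA hg hgs
  obtain ⟨k, hkA, hk⟩ := exists_mem_forall_eq_exp hA (A.smul_mem hlA (1 / 2))
  refine ⟨k, hkA, fun x => ?_⟩
  rw [hk, sqrt_eq_exp (Complex.slitPlane_ne_zero (hgs x)), ContinuousMap.smul_apply, hl,
    smul_eq_mul, one_div_mul_eq_div]

end ClosedSubalgebra

section Step

/-- The plane slit along the rays `±i[1, ∞)` of the imaginary axis. -/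
def slitAxisPlane : Set ℂ := {v | v.re = 0 → |v.im| < 1}

/-- The inverse `v ↦ v + √(1 + v²)` of `k ↦ (k - k⁻¹) / 2`, which maps `slitAxisPlane`
conformally onto the right half-plane. -/
noncomputable def expArsinh (v : ℂ) : ℂ := v + Complex.sqrt (1 + v ^ 2)

/-- A holomorphic substitute on `slitAxisPlane` for the indicator function of the left half-plane:
it is close to `1` far to the left, close to `0` far to the right, and bounded in between. -/
noncomputable def holStep (v : ℂ) : ℂ := (1 + expArsinh v)⁻¹

theorem one_add_sq_mem_slitPlane {v : ℂ} (hv : v ∈ slitAxisPlane) :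
    1 + v ^ 2 ∈ Complex.slitPlane := by
  rw [Complex.mem_slitPlane_iff]
  by_contra! h
  obtain ⟨hre, him⟩ := h
  simp only [pow_two, Complex.add_re, Complex.one_re, Complex.mul_re, Complex.add_im,
    Complex.one_im, Complex.mul_im] at hre him
  have hzero : v.re = 0 := by
    rcases mul_eq_zero.1 (show v.re * v.im = 0 by linarith) with h | h
    · exact h
    · rw [h] at hre
      nlinarith [sq_nonneg v.re]
  have hlt := (sq_lt_one_iff_abs_lt_one _).2 (hv hzero)
  rw [hzero] at hre
  linarith

theorem re_sqrt_pos {z : ℂ} (hz : z ∈ Complex.slitPlane) : 0 < (Complex.sqrt z).re := by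
  rw [sqrt_eq_exp (Complex.slitPlane_ne_zero hz), Complex.exp_re]
  have harg := (Complex.arg_le_pi z).lt_of_ne (Complex.slitPlane_arg_ne_pi hz)
  have him : (Complex.log z / 2).im = z.arg / 2 := by
    rw [Complex.div_ofNat_im, Complex.log_im]
  refine mul_pos (Real.exp_pos _) (Real.cos_pos_of_mem_Ioo ?_)
  rw [him]
  constructor <;> linarith [Complex.neg_pi_lt_arg z]

theorem expArsinh_mul (v : ℂ) : expArsinh v * (Complex.sqrt (1 + v ^ 2) - v) = 1 := by
  have hsq : Complex.sqrt (1 + v ^ 2) ^ 2 = 1 + v ^ 2 := Complex.cpow_nat_inv_pow _ two_ne_zero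
  rw [expArsinh]
  linear_combination hsq

theorem inv_expArsinh (v : ℂ) : (expArsinh v)⁻¹ = Complex.sqrt (1 + v ^ 2) - v :=
  inv_eq_of_mul_eq_one_right (expArsinh_mul v)

theorem expArsinh_ne_zero (v : ℂ) : expArsinh v ≠ 0 := left_ne_zero_of_mul_eq_one (expArsinh_mul v)

theorem re_expArsinh_pos {v : ℂ} (hv : v ∈ slitAxisPlane) : 0 < (expArsinh v).re := by
  have hsum : expArsinh v + (expArsinh v)⁻¹ = 2 * Complex.sqrt (1 + v ^ 2) := by
    rw [inv_expArsinh, expArsinh]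
    ring
  have hre : (expArsinh v).re * (1 + (Complex.normSq (expArsinh v))⁻¹) =
      2 * (Complex.sqrt (1 + v ^ 2)).re := by
    have := congrArg Complex.re hsum
    simp only [Complex.add_re, Complex.inv_re, Complex.mul_re, Complex.re_ofNat,
      Complex.im_ofNat, zero_mul, sub_zero] at this
    rw [← this]
    ring
  have hpos := re_sqrt_pos (one_add_sq_mem_slitPlane hv)
  have hfac : 0 < 1 + (Complex.normSq (expArsinh v))⁻¹ :=
    add_pos_of_pos_of_nonneg one_pos (inv_nonneg.2 (Complex.normSq_nonneg _))
  exact (pos_iff_pos_of_mul_pos (by linarith)).2 hfac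

theorem one_le_norm_expArsinh {v : ℂ} (hv : v ∈ slitAxisPlane) (hre : 0 ≤ v.re) :
    1 ≤ ‖expArsinh v‖ := by
  have hdiff : expArsinh v - (expArsinh v)⁻¹ = 2 * v := by
    rw [inv_expArsinh, expArsinh]
    ring
  have hmul : (expArsinh v).re * (1 - (Complex.normSq (expArsinh v))⁻¹) = 2 * v.re := by
    have := congrArg Complex.re hdiff
    simp only [Complex.sub_re, Complex.inv_re, Complex.mul_re, Complex.re_ofNat,
      Complex.im_ofNat, zero_mul, sub_zero] at this
    rw [← this]
    ring
  have hinv : (Complex.normSq (expArsinh v))⁻¹ ≤ 1 :=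
    sub_nonneg.1 (nonneg_of_mul_nonneg_right (hmul ▸ by positivity) (re_expArsinh_pos hv))
  rw [inv_le_one₀ (Complex.normSq_pos.2 (expArsinh_ne_zero v)), Complex.normSq_eq_norm_sq] at hinv
  exact (one_le_sq_iff₀ (norm_nonneg _)).1 hinv

theorem norm_expArsinh_mul_neg_re_le {v : ℂ} (hv : v ∈ slitAxisPlane) :
    ‖expArsinh v‖ * -v.re ≤ 1 := by
  have hle : -v.re ≤ ‖Complex.sqrt (1 + v ^ 2) - v‖ := by
    refine le_trans ?_ (Complex.re_le_norm _)
    rw [Complex.sub_re]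
    linarith [re_sqrt_pos (one_add_sq_mem_slitPlane hv)]
  calc ‖expArsinh v‖ * -v.re
      ≤ ‖expArsinh v‖ * ‖Complex.sqrt (1 + v ^ 2) - v‖ := by gcongr
    _ = 1 := by rw [← norm_mul, expArsinh_mul, norm_one]

theorem one_sub_holStep {v : ℂ} (hv : v ∈ slitAxisPlane) :
    1 - holStep v = holStep v * expArsinh v := by
  have hne : 1 + expArsinh v ≠ 0 := fun h => by
    have := congrArg Complex.re h
    simp only [Complex.add_re, Complex.one_re, Complex.zero_re] at this
    linarith [re_expArsinh_pos hv]
  rw [holStep]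
  field_simp
  ring

theorem one_add_normSq_le_normSq_one_add {k : ℂ} (hk : 0 ≤ k.re) : 1 + ‖k‖ ^ 2 ≤ ‖1 + k‖ ^ 2 := by
  rw [← Complex.normSq_eq_norm_sq, ← Complex.normSq_eq_norm_sq, Complex.normSq_add]
  simp only [map_one, one_mul, Complex.conj_re]
  linarith

theorem norm_holStep_le_one {v : ℂ} (hv : v ∈ slitAxisPlane) : ‖holStep v‖ ≤ 1 := by
  have h := one_add_normSq_le_normSq_one_add (re_expArsinh_pos hv).le
  rw [holStep, norm_inv]
  exact inv_le_one_of_one_le₀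
    ((one_le_sq_iff₀ (norm_nonneg _)).1 (by linarith [sq_nonneg ‖expArsinh v‖]))

theorem norm_one_sub_pow_le {R : Type*} [NormedRing R] [NormOneClass R] {x : R} (hx : ‖x‖ ≤ 1)
    (m : ℕ) : ‖1 - x ^ m‖ ≤ m * ‖1 - x‖ := by
  have hsum : ‖∑ i ∈ Finset.range m, x ^ i‖ ≤ m := by
    simpa using norm_sum_le_of_le (Finset.range m) fun i _ =>
      (norm_pow_le x i).trans (pow_le_one₀ (norm_nonneg x) hx)
  rw [← geom_sum_mul_neg]
  exact (norm_mul_le _ _).trans (by gcongr)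

theorem norm_one_sub_holStep_pow_le {v : ℂ} (hv : v ∈ slitAxisPlane) {β : ℝ} (hβ : 0 < β)
    (hre : v.re ≤ -β) (m : ℕ) : ‖1 - holStep v ^ m‖ ≤ m / β := by
  have hnorm : ‖1 - holStep v‖ ≤ ‖expArsinh v‖ := by
    rw [one_sub_holStep hv, norm_mul]
    exact mul_le_of_le_one_left (norm_nonneg _) (norm_holStep_le_one hv)
  have hβv : ‖expArsinh v‖ * β ≤ 1 :=
    (mul_le_mul_of_nonneg_left (by linarith) (norm_nonneg _)).trans
      (norm_expArsinh_mul_neg_re_le hv)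
  calc ‖1 - holStep v ^ m‖
      ≤ m * ‖1 - holStep v‖ := norm_one_sub_pow_le (norm_holStep_le_one hv) m
    _ ≤ m * (1 / β) := by
        gcongr
        exact hnorm.trans ((le_div_iff₀ hβ).2 hβv)
    _ = m / β := mul_one_div _ _

theorem norm_holStep_pow_two_mul_le {v : ℂ} (hv : v ∈ slitAxisPlane) (hre : 0 ≤ v.re) (n : ℕ) :
    ‖holStep v ^ (2 * n)‖ ≤ (1 / 2) ^ n := by
  have hsq : ‖holStep v‖ ^ 2 ≤ 1 / 2 := by
    have h := one_add_normSq_le_normSq_one_add (re_expArsinh_pos hv).le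
    have hk := one_le_pow₀ (n := 2) (one_le_norm_expArsinh hv hre)
    rw [holStep, norm_inv, inv_pow, ← one_div]
    gcongr
    linarith
  rw [norm_pow, pow_mul]
  exact pow_le_pow_left₀ (sq_nonneg _) hsq n

theorem exists_mem_forall_eq_holStep {X : Type*} [TopologicalSpace X] [CompactSpace X]
    {A : Subalgebra ℂ C(X, ℂ)} (hA : IsClosed (A : Set C(X, ℂ))) {v : C(X, ℂ)} (hv : v ∈ A)
    (hvs : ∀ x, v x ∈ slitAxisPlane) : ∃ k ∈ A, ∀ x, k x = holStep (v x) := by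
  obtain ⟨h, hhA, hh⟩ := exists_mem_forall_eq_sqrt hA (A.add_mem A.one_mem (A.pow_mem hv 2))
    fun x => one_add_sq_mem_slitPlane (hvs x)
  have hk : ∀ x, (v + h) x = expArsinh (v x) := fun x => by rw [ContinuousMap.add_apply, hh]; rfl
  obtain ⟨s, hsA, hs⟩ := exists_mem_forall_eq_inv hA
    (A.add_mem A.one_mem (A.add_mem hv hhA)) fun x => by
      refine Or.inl ?_
      rw [ContinuousMap.add_apply, hk, Complex.add_re]
      exact add_pos (by simp) (re_expArsinh_pos (hvs x))
  exact ⟨s, hsA, fun x => by rw [hs, ContinuousMap.add_apply, hk]; rfl⟩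

end Step

section PlanarCutoff

variable {S T Y : Set ℂ}

theorem exists_polynomial_norm_eval_sub_le [CompactSpace Y] {k : C(Y, ℂ)}
    (hk : k ∈ (polynomialFunctions Y).topologicalClosure) {ε : ℝ} (hε : 0 < ε) :
    ∃ p : Polynomial ℂ, ∀ y : Y, ‖p.eval (y : ℂ) - k y‖ ≤ ε := by
  obtain ⟨_, ⟨p, -, rfl⟩, hp⟩ := Metric.mem_closure_iff.1 hk ε hε
  refine ⟨p, fun y => ?_⟩
  rw [norm_sub_rev, ← dist_eq_norm]
  exact (ContinuousMap.dist_apply_le_dist y).trans hp.le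

theorem exists_polynomial_norm_eval_sub_holStep_pow_le (hY : IsCompact Y) {q : Polynomial ℂ}
    (hq : ∀ y ∈ Y, q.eval y ∈ slitAxisPlane) (m : ℕ) {ε : ℝ} (hε : 0 < ε) :
    ∃ p : Polynomial ℂ, ∀ y ∈ Y, ‖p.eval y - holStep (q.eval y) ^ m‖ ≤ ε := by
  have := isCompact_iff_compactSpace.1 hY
  obtain ⟨k, hkA, hk⟩ := exists_mem_forall_eq_holStep
    (polynomialFunctions Y).isClosed_topologicalClosure (v := q.toContinuousMapOn Y)
    ((polynomialFunctions Y).le_topologicalClosure ⟨q, trivial, rfl⟩) fun y => hq y y.2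
  obtain ⟨p, hp⟩ := exists_polynomial_norm_eval_sub_le
    ((polynomialFunctions Y).topologicalClosure.pow_mem hkA m) hε
  refine ⟨p, fun y hy => ?_⟩
  have := hp ⟨y, hy⟩
  rwa [ContinuousMap.pow_apply, hk] at this

theorem exists_shift_mem_slitAxisPlane (hS : IsCompact S) (hSre : ∀ s ∈ S, s.re ≤ 0)
    (hSaxis : {s ∈ S | s.re = 0}.Subsingleton) {α ρ : ℝ} (hα : 0 < α) (hρ : 0 < ρ) :
    ∃ b : ℂ, 0 < b.re ∧ b.re ≤ α ∧ ∀ s, s ∈ S ∨ 0 ≤ s.re → (s + b) / ρ ∈ slitAxisPlane := by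
  obtain ⟨c, hc⟩ : ∃ c : ℝ, ∀ s ∈ S, s.re = 0 → s.im = c := by
    rcases hSaxis.eq_empty_or_singleton with h | ⟨a, ha⟩
    · exact ⟨0, fun s hs h0 => (h.le ⟨hs, h0⟩).elim⟩
    · exact ⟨a.im, fun s hs h0 => congrArg Complex.im (ha.le ⟨hs, h0⟩)⟩
  have hfar : IsCompact (S ∩ {s | ρ ≤ |s.im - c|}) :=
    hS.inter_right (isClosed_le continuous_const (by fun_prop))
  obtain ⟨η, hη, hηle⟩ := hfar.exists_forall_le' (f := fun s => -s.re) (a := 0) (by fun_prop)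
    fun s hs => neg_pos.2 <| (hSre s hs.1).lt_of_ne fun h0 => by
      have := hs.2
      rw [mem_ofPred_eq, hc s hs.1 h0, sub_self, abs_zero] at this
      exact this.not_gt hρ
  refine ⟨⟨min (η / 2) α, -c⟩, by positivity, min_le_right _ _, fun s hs hzero => ?_⟩
  rw [Complex.div_ofReal_re, div_eq_zero_iff, or_iff_left hρ.ne', Complex.add_re] at hzero
  rw [Complex.div_ofReal_im, abs_div, abs_of_pos hρ, div_lt_one hρ, Complex.add_im,
    ← sub_eq_add_neg]
  have hle : min (η / 2) α ≤ η / 2 := min_le_left _ _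
  have hpos : 0 < min (η / 2) α := by positivity
  simp only at hzero
  by_contra! hge
  rcases hs with hs | hs
  · have := hηle s ⟨hs, hge⟩
    linarith
  · linarith

theorem exists_polynomial_cutoff (hS : IsCompact S) (hSre : ∀ s ∈ S, s.re ≤ 0)
    (hSaxis : {s ∈ S | s.re = 0}.Subsingleton) (hT : IsCompact T) (hTre : ∀ t ∈ T, 0 ≤ t.re)
    {α ε : ℝ} (hα : 0 < α) (hε : 0 < ε) :
    ∃ p : Polynomial ℂ, (∀ y ∈ S ∪ T, ‖p.eval y‖ ≤ 1 + ε) ∧ (∀ t ∈ T, ‖p.eval t‖ ≤ ε) ∧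
      ∀ s ∈ S, s.re ≤ -α → ‖1 - p.eval s‖ ≤ ε := by
  obtain ⟨n, hn⟩ := exists_pow_lt_of_lt_one (half_pos hε) (one_half_lt_one (α := ℝ))
  obtain ⟨ρ, hρ, hρlt⟩ := exists_pos_mul_lt (show 0 < α * ε / 4 by positivity) (2 * n : ℕ)
  obtain ⟨b, hb, hbα, hslit⟩ := exists_shift_mem_slitAxisPlane hS hSre hSaxis (half_pos hα) hρ
  have hslitY : ∀ y ∈ S ∪ T, (y + b) / ρ ∈ slitAxisPlane := fun y hy =>
    hslit y (hy.imp_right (hTre y))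
  obtain ⟨p, hp⟩ := exists_polynomial_norm_eval_sub_holStep_pow_le (hS.union hT)
    (q := (Polynomial.X + Polynomial.C b) * Polynomial.C (ρ : ℂ)⁻¹)
    (fun y hy => by simpa [← div_eq_mul_inv] using hslitY y hy) (2 * n) (half_pos hε)
  simp only [Polynomial.eval_mul, Polynomial.eval_add, Polynomial.eval_X, Polynomial.eval_C,
    ← div_eq_mul_inv] at hp
  refine ⟨p, fun y hy => ?_, fun t ht => ?_, fun s hs hsα => ?_⟩
  · have hone : ‖holStep ((y + b) / ρ) ^ (2 * n)‖ ≤ 1 := by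
      rw [norm_pow]
      exact pow_le_one₀ (norm_nonneg _) (norm_holStep_le_one (hslitY y hy))
    linarith [norm_le_norm_add_norm_sub' (p.eval y) (holStep ((y + b) / ρ) ^ (2 * n)), hp y hy]
  · have hre : 0 ≤ ((t + b) / ρ).re := by
      rw [Complex.div_ofReal_re, Complex.add_re]
      have := hTre t ht
      positivity
    linarith [norm_le_norm_add_norm_sub' (p.eval t) (holStep ((t + b) / ρ) ^ (2 * n)),
      norm_holStep_pow_two_mul_le (hslitY t (.inr ht)) hre n, hp t (.inr ht)]
  · have hre : ((s + b) / ρ).re ≤ -(α / 2 / ρ) := by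
      rw [Complex.div_ofReal_re, Complex.add_re, ← neg_div]
      gcongr
      linarith
    have hclose : ‖1 - holStep ((s + b) / ρ) ^ (2 * n)‖ ≤ ε / 2 := by
      refine (norm_one_sub_holStep_pow_le (hslitY s (.inl hs)) (by positivity) hre _).trans ?_
      rw [div_le_iff₀ (by positivity), show ε / 2 * (α / 2 / ρ) = α * ε / 4 / ρ by ring,
        le_div_iff₀ hρ]
      exact hρlt.le
    have htri := norm_sub_le_norm_sub_add_norm_sub 1 (holStep ((s + b) / ρ) ^ (2 * n)) (p.eval s)
    rw [norm_sub_rev (holStep _ ^ _)] at htri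
    linarith [hp s (.inl hs)]

end PlanarCutoff

section PolynomialHull

variable {N : ℕ} {E F K L : Set (EN N)} {z : EN N}

theorem exists_mul_pow_lt_mul_pow {a b c : ℝ} (ha : 0 ≤ a) (hab : a < b) (hc : 0 < c) (C : ℝ) :
    ∃ n : ℕ, C * a ^ n < c * b ^ n := by
  have hb : 0 < b := ha.trans_lt hab
  have hlim : Tendsto (fun n : ℕ => C * (a / b) ^ n) atTop (𝓝 0) := by
    simpa using (tendsto_pow_atTop_nhds_zero_of_lt_one (div_nonneg ha hb.le)
      ((div_lt_one hb).2 hab)).const_mul C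
  obtain ⟨n, hn⟩ := (hlim.eventually_lt_const hc).exists
  refine ⟨n, ?_⟩
  rwa [div_pow, ← mul_div_assoc, div_lt_iff₀ (by positivity)] at hn

theorem continuous_eval_ofLp (p : MvPolynomial (Fin N) ℂ) :
    Continuous fun w : EN N => MvPolynomial.eval w.ofLp p :=
  (MvPolynomial.continuous_eval p).comp (by fun_prop)

theorem norm_eval_le_of_mem_polyHull (hz : z ∈ polyHull E) {p : MvPolynomial (Fin N) ℂ} {C : ℝ}
    (hC : 0 ≤ C) (hp : ∀ w ∈ E, ‖MvPolynomial.eval w.ofLp p‖ ≤ C) :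
    ‖MvPolynomial.eval z.ofLp p‖ ≤ C :=
  (hz p).trans (Real.iSup_le (fun w => Real.iSup_le (hp w) hC) hC)

theorem norm_eval_le_biSup (hE : IsCompact E) (p : MvPolynomial (Fin N) ℂ) (hz : z ∈ E) :
    ‖MvPolynomial.eval z.ofLp p‖ ≤ ⨆ w ∈ E, ‖MvPolynomial.eval w.ofLp p‖ := by
  obtain ⟨C, hC⟩ := hE.exists_bound_of_continuousOn (continuous_eval_ofLp p).continuousOn
  refine le_ciSup₂ (f := fun (w : EN N) (_ : w ∈ E) => ‖MvPolynomial.eval w.ofLp p‖) ⟨C, ?_⟩ z hz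
  rintro _ ⟨_, ⟨w, rfl⟩, hw, rfl⟩
  exact hC w hw

theorem subset_polyHull (hE : IsCompact E) : E ⊆ polyHull E :=
  fun _ hz p => norm_eval_le_biSup hE p hz

-- If `p` separated `z` from `F`, the products `p ^ n * g` with cutoffs `g` would separate `z`
-- from `E`.
theorem mem_polyHull_of_forall_exists_cutoff (hE : IsCompact E) (hF : IsCompact F)
    (hz : z ∈ polyHull E) {c C : ℝ} (hc : 0 < c)
    (hcut : ∀ U, IsOpen U → F ⊆ U → ∀ ε > 0, ∃ g : MvPolynomial (Fin N) ℂ,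
      (∀ w ∈ E, ‖MvPolynomial.eval w.ofLp g‖ ≤ C) ∧
      (∀ w ∈ E \ U, ‖MvPolynomial.eval w.ofLp g‖ ≤ ε) ∧ c ≤ ‖MvPolynomial.eval z.ofLp g‖) :
    z ∈ polyHull F := by
  intro p
  by_contra! hlt
  obtain ⟨r, hFr, hrz⟩ := exists_between hlt
  have hFlt : ∀ w ∈ F, ‖MvPolynomial.eval w.ofLp p‖ < r := fun w hw =>
    (norm_eval_le_biSup hF p hw).trans_lt hFr
  have hr : 0 ≤ r :=
    (Real.iSup_nonneg fun w => Real.iSup_nonneg fun _ => norm_nonneg _).trans hFr.le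
  obtain ⟨n, hn⟩ := exists_mul_pow_lt_mul_pow hr hrz hc C
  obtain ⟨M, hM⟩ := hE.exists_bound_of_continuousOn (continuous_eval_ofLp p).continuousOn
  obtain ⟨ε, hε, hεn⟩ := exists_pos_mul_lt
    (show 0 < c * ‖MvPolynomial.eval z.ofLp p‖ ^ n by have := hr.trans_lt hrz; positivity) (|M| ^ n)
  obtain ⟨g, hgE, hgU, hgz⟩ := hcut {w | ‖MvPolynomial.eval w.ofLp p‖ < r}
    (isOpen_lt (continuous_eval_ofLp p).norm continuous_const) hFlt ε hε
  have hbound : ∀ w ∈ E, ‖MvPolynomial.eval w.ofLp (p ^ n * g)‖ ≤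
      max (C * r ^ n) (|M| ^ n * ε) := by
    intro w hw
    rw [map_mul, map_pow, norm_mul, norm_pow]
    by_cases hwU : ‖MvPolynomial.eval w.ofLp p‖ < r
    · rw [mul_comm]
      exact le_max_of_le_left (mul_le_mul (hgE w hw) (by gcongr) (by positivity)
        ((norm_nonneg _).trans (hgE w hw)))
    · refine le_max_of_le_right ?_
      gcongr
      · exact (hM w hw).trans (le_abs_self M)
      · exact hgU w ⟨hw, hwU⟩
  refine (norm_eval_le_of_mem_polyHull hz (by positivity) hbound).not_gt ?_
  rw [map_mul, map_pow, norm_mul, norm_pow, mul_comm (‖_‖ ^ n)]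
  exact (max_lt hn hεn).trans_le (by gcongr)

theorem eval_aeval_mvPolynomial (x : Fin N → ℂ) (f : MvPolynomial (Fin N) ℂ) (p : Polynomial ℂ) :
    MvPolynomial.eval x (Polynomial.aeval f p) = p.eval (MvPolynomial.eval x f) := by
  simpa [MvPolynomial.aeval_eq_eval] using
    (Polynomial.aeval_algHom_apply (MvPolynomial.aeval x) f p).symm

theorem exists_mvPolynomial_cutoff (hK : IsCompact K) (hL : IsCompact L)
    {f : MvPolynomial (Fin N) ℂ} (hfK : ∀ w ∈ K, (MvPolynomial.eval w.ofLp f).re ≤ 0)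
    (hfL : ∀ w ∈ L, 0 ≤ (MvPolynomial.eval w.ofLp f).re)
    (haxis : {w ∈ K | (MvPolynomial.eval w.ofLp f).re = 0}.Subsingleton)
    {α ε : ℝ} (hα : 0 < α) (hε : 0 < ε) :
    ∃ g : MvPolynomial (Fin N) ℂ, (∀ w ∈ K ∪ L, ‖MvPolynomial.eval w.ofLp g‖ ≤ 1 + ε) ∧
      (∀ w ∈ L, ‖MvPolynomial.eval w.ofLp g‖ ≤ ε) ∧
      ∀ w ∈ K, (MvPolynomial.eval w.ofLp f).re ≤ -α → ‖1 - MvPolynomial.eval w.ofLp g‖ ≤ ε := by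
  set F : EN N → ℂ := fun w => MvPolynomial.eval w.ofLp f
  have hF : Continuous F := continuous_eval_ofLp f
  have hFaxis : {s ∈ F '' K | s.re = 0}.Subsingleton := by
    rintro _ ⟨⟨w, hw, rfl⟩, hw0⟩ _ ⟨⟨w', hw', rfl⟩, hw0'⟩
    exact congrArg F (haxis ⟨hw, hw0⟩ ⟨hw', hw0'⟩)
  obtain ⟨p, hp, hpL, hpK⟩ := exists_polynomial_cutoff (hK.image hF) (forall_mem_image.2 hfK) hFaxis
    (hL.image hF) (forall_mem_image.2 hfL) hα hε
  rw [← image_union, forall_mem_image] at hp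
  rw [forall_mem_image] at hpL hpK
  refine ⟨Polynomial.aeval f p, ?_, ?_, ?_⟩ <;> simpa only [eval_aeval_mvPolynomial]

theorem mem_polyHull_union_of_re_nonneg (hK : IsCompact K) (hL : IsCompact L)
    {f : MvPolynomial (Fin N) ℂ} (hfK : ∀ w ∈ K, (MvPolynomial.eval w.ofLp f).re ≤ 0)
    (hfL : ∀ w ∈ L, 0 ≤ (MvPolynomial.eval w.ofLp f).re)
    (haxis : {w ∈ K | (MvPolynomial.eval w.ofLp f).re = 0}.Subsingleton)
    (hz : z ∈ polyHull (K ∪ L)) (hfz : 0 ≤ (MvPolynomial.eval z.ofLp f).re) :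
    z ∈ polyHull (L ∪ {w ∈ K | (MvPolynomial.eval w.ofLp f).re = 0}) := by
  refine mem_polyHull_of_forall_exists_cutoff (hK.union hL) (hL.union haxis.isCompact) hz
    (c := 1 / 2) (C := 5 / 2) one_half_pos fun U hU hsub ε hε => ?_
  have hcont : Continuous fun w : EN N => -(MvPolynomial.eval w.ofLp f).re :=
    (Complex.continuous_re.comp (continuous_eval_ofLp f)).neg
  have hneg : ∀ w ∈ K \ U, 0 < -(MvPolynomial.eval w.ofLp f).re := fun w hw =>
    neg_pos.2 ((hfK w hw.1).lt_of_ne fun h0 => hw.2 (hsub (.inr ⟨hw.1, h0⟩)))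
  obtain ⟨α, hα, hle⟩ := (hK.diff hU).exists_forall_le' hcont.continuousOn hneg
  obtain ⟨g, hg, hgL, hgK⟩ := exists_mvPolynomial_cutoff hK (hL.insert z) hfK
    (forall_mem_insert.2 ⟨hfz, hfL⟩) haxis hα (lt_min hε one_half_pos)
  refine ⟨1 - g, ?_, ?_, ?_⟩ <;> simp only [map_sub, map_one]
  · intro w hw
    have hgw := hg w (union_subset_union_right K (subset_insert z L) hw)
    have htri := norm_sub_le 1 (MvPolynomial.eval w.ofLp g)
    rw [norm_one] at htri
    linarith [min_le_right ε (1 / 2)]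
  · rintro w ⟨hw | hw, hwU⟩
    · exact (hgK w hw (le_neg_of_le_neg (hle w ⟨hw, hwU⟩))).trans (min_le_left _ _)
    · exact absurd (hsub (.inl hw)) hwU
  · have htri := norm_sub_norm_le 1 (MvPolynomial.eval z.ofLp g)
    rw [norm_one] at htri
    linarith [hgL z (mem_insert z L), min_le_right ε (1 / 2)]

theorem mem_polyHull_of_re_neg (hK : IsCompact K) (hL : IsCompact L)
    {f : MvPolynomial (Fin N) ℂ} (hfK : ∀ w ∈ K, (MvPolynomial.eval w.ofLp f).re ≤ 0)
    (hfL : ∀ w ∈ L, 0 ≤ (MvPolynomial.eval w.ofLp f).re)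
    (haxis : {w ∈ K | (MvPolynomial.eval w.ofLp f).re = 0}.Subsingleton)
    (hz : z ∈ polyHull (K ∪ L)) (hfz : (MvPolynomial.eval z.ofLp f).re < 0) :
    z ∈ polyHull K := by
  have haxis_insert :
      {w ∈ insert z K | (MvPolynomial.eval w.ofLp f).re = 0}.Subsingleton := by
    refine haxis.anti ?_
    rintro w ⟨rfl | hw, h0⟩
    · exact absurd h0 hfz.ne
    · exact ⟨hw, h0⟩
  refine mem_polyHull_of_forall_exists_cutoff (hK.union hL) hK hz (c := 1 / 2) (C := 3 / 2)
    one_half_pos fun U _ hKU ε hε => ?_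
  obtain ⟨g, hg, hgL, hgK⟩ := exists_mvPolynomial_cutoff (hK.insert z) hL
    (forall_mem_insert.2 ⟨hfz.le, hfK⟩) hfL haxis_insert (neg_pos.2 hfz) (lt_min hε one_half_pos)
  refine ⟨g, fun w hw => ?_, ?_, ?_⟩
  · have hgw := hg w (union_subset_union_left L (subset_insert z K) hw)
    linarith [min_le_right ε (1 / 2)]
  · rintro w ⟨hw | hw, hwU⟩
    · exact absurd (hKU hw) hwU
    · exact (hgL w hw).trans (min_le_left _ _)
  · have htri := norm_sub_norm_le 1 (MvPolynomial.eval z.ofLp g)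
    rw [norm_one] at htri
    linarith [hgK z (mem_insert z K) (neg_neg _).ge, min_le_right ε (1 / 2)]

theorem exists_eval_eq_zero_ne_zero {q : EN N} (hzq : z ≠ q) : ∃ p : MvPolynomial (Fin N) ℂ,
    MvPolynomial.eval q.ofLp p = 0 ∧ MvPolynomial.eval z.ofLp p ≠ 0 := by
  obtain ⟨j, hj⟩ : ∃ j, z j ≠ q j := by
    by_contra! h
    exact hzq (PiLp.ext h)
  exact ⟨MvPolynomial.X j - MvPolynomial.C (q j), by simp, by simpa [sub_eq_zero] using hj⟩

theorem polynomiallyConvex_insert (hL : IsCompact L) (hLc : PolynomiallyConvex L) (q : EN N) :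
    PolynomiallyConvex (insert q L) := by
  refine Subset.antisymm (fun z hz => ?_) (subset_polyHull (hL.insert q))
  by_cases hzq : z = q
  · exact .inl hzq
  obtain ⟨p, hpq, hpz⟩ := exists_eval_eq_zero_ne_zero hzq
  obtain ⟨C, hC⟩ := (hL.insert q).exists_bound_of_continuousOn (continuous_eval_ofLp p).continuousOn
  refine .inr (hLc.le (mem_polyHull_of_forall_exists_cutoff (hL.insert q) hL hz
    (norm_pos_iff.2 hpz) fun U _ hLU ε hε => ⟨p, hC, ?_, le_rfl⟩))
  rintro w ⟨rfl | hw, hwU⟩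
  · rw [hpq, norm_zero]
    exact hε.le
  · exact absurd (hLU hw) hwU

theorem polynomiallyConvex_union_of_subsingleton (hL : IsCompact L) (hLc : PolynomiallyConvex L)
    (hF : F.Subsingleton) : PolynomiallyConvex (L ∪ F) := by
  rcases hF.eq_empty_or_singleton with rfl | ⟨q, rfl⟩
  · rwa [union_empty]
  · rw [union_singleton]
    exact polynomiallyConvex_insert hL hLc q

theorem exists_mvPolynomial_eval_eq (φ : EN N →ₗ[ℂ] ℂ) :
    ∃ f : MvPolynomial (Fin N) ℂ, ∀ w : EN N, MvPolynomial.eval w.ofLp f = φ w := by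
  refine ⟨∑ j, MvPolynomial.C (φ (EuclideanSpace.single j 1)) * MvPolynomial.X j, fun w => ?_⟩
  have hw : w = ∑ j, w j • EuclideanSpace.single j (1 : ℂ) := by
    ext i
    simp [Finset.sum_apply, Pi.single_apply]
  conv_rhs => rw [hw]
  simp [mul_comm]

-- A half-space `Re ℓ ≤ s` contains discs of arbitrarily large radius, and a large enough one
-- contains `ℓ '' K` but not `ℓ z`.
theorem polynomiallyConvex_of_convex (hK : IsCompact K) (hKc : Convex ℝ K) :
    PolynomiallyConvex K := by
  refine Subset.antisymm (fun z hz => ?_) (subset_polyHull hK)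
  by_contra hzK
  obtain ⟨ℓ, s, hs, hsz⟩ := RCLike.geometric_hahn_banach_closed_point (𝕜 := ℂ) hKc hK.isClosed hzK
  simp only [RCLike.re_to_complex] at hs hsz
  obtain ⟨f, hf⟩ := exists_mvPolynomial_eval_eq (ℓ : EN N →ₗ[ℂ] ℂ)
  obtain ⟨B, hB⟩ := hK.exists_bound_of_continuousOn (f := fun w => ℓ w - s) (by fun_prop)
  have hd : 0 < (ℓ z).re - s := sub_pos.2 hsz
  set R := (B ^ 2 + 1) / (2 * ((ℓ z).re - s)) with hR
  have hRd : 2 * R * ((ℓ z).re - s) = B ^ 2 + 1 := by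
    rw [hR]
    field_simp
  have hRpos : 0 < R := by positivity
  have heval (w : EN N) :
      MvPolynomial.eval w.ofLp (f + MvPolynomial.C ((R - s : ℝ) : ℂ)) = (ℓ w - s) + (R : ℝ) := by
    rw [map_add, MvPolynomial.eval_C, hf, Complex.ofReal_sub]
    simp only [ContinuousLinearMap.coe_coe]
    ring
  have hnorm (u : ℂ) : ‖u + R‖ ^ 2 = ‖u‖ ^ 2 + 2 * R * u.re + R ^ 2 := by
    rw [← Complex.normSq_eq_norm_sq, ← Complex.normSq_eq_norm_sq, Complex.normSq_add]
    simp only [Complex.normSq_ofReal, Complex.conj_ofReal, Complex.re_mul_ofReal]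
    ring
  have hzle := norm_eval_le_of_mem_polyHull hz (Real.sqrt_nonneg (B ^ 2 + R ^ 2)) fun w hw => by
    rw [heval]
    refine Real.le_sqrt_of_sq_le ?_
    rw [hnorm]
    have := pow_le_pow_left₀ (norm_nonneg _) (hB w hw) 2
    have := mul_pos hRpos (sub_pos.2 (hs w hw))
    simp only [Complex.sub_re, Complex.ofReal_re]
    linarith
  rw [heval, Real.le_sqrt (norm_nonneg _) (by positivity), hnorm, Complex.sub_re,
    Complex.ofReal_re, hRd] at hzle
  linarith [sq_nonneg ‖ℓ z - s‖]

end PolynomialHull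

theorem kallin_lemma_general {N : ℕ} {K L : Set (EN N)} (hK : IsCompact K)
    (hKc : PolynomiallyConvex K) (hL : IsCompact L) (hLc : PolynomiallyConvex L)
    {f : MvPolynomial (Fin N) ℂ} (hfK : ∀ w ∈ K, (MvPolynomial.eval w.ofLp f).re ≤ 0)
    (hfL : ∀ w ∈ L, 0 ≤ (MvPolynomial.eval w.ofLp f).re)
    (haxis : {w ∈ K | (MvPolynomial.eval w.ofLp f).re = 0}.Subsingleton) :
    PolynomiallyConvex (K ∪ L) := by
  refine Subset.antisymm (fun z hz => ?_) (subset_polyHull (hK.union hL))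
  rcases lt_or_ge (MvPolynomial.eval z.ofLp f).re 0 with hfz | hfz
  · exact .inl (hKc.le (mem_polyHull_of_re_neg hK hL hfK hfL haxis hz hfz))
  · have hzLF := (polynomiallyConvex_union_of_subsingleton hL hLc haxis).le
      (mem_polyHull_union_of_re_nonneg hK hL hfK hfL haxis hz hfz)
    exact hzLF.elim .inr fun h => .inl h.1

/-- **Kallin's lemma.** Let `K, L` be compact convex subsets of `ℂ^N` meeting at exactly one
point. If a complex-linear functional `φ` satisfies `Re φ ≤ 0` on `K`, `Re φ ≥ 0` on `L`,
and `{Re φ = 0}` meets `K` in a single point, then `K ∪ L` is polynomially convex. -/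
theorem kallin_lemma {N : ℕ} (K L : Set (EN N)) (hK : IsCompact K) (hKc : Convex ℝ K)
    (hL : IsCompact L) (hLc : Convex ℝ L) (hKL : ∃ p, K ∩ L = {p})
    (φ : EN N →ₗ[ℂ] ℂ)
    (hφK : ∀ z ∈ K, (φ z).re ≤ 0) (hφL : ∀ z ∈ L, 0 ≤ (φ z).re)
    (hker : ∃ q, {z ∈ K | (φ z).re = 0} = {q}) :
    PolynomiallyConvex (K ∪ L) := by
  obtain ⟨f, hf⟩ := exists_mvPolynomial_eval_eq φ
  simp only [← hf] at hφK hφL hker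
  exact kallin_lemma_general hK (polynomiallyConvex_of_convex hK hKc) hL
    (polynomiallyConvex_of_convex hL hLc) hφK hφL
    (exists_eq_singleton_iff_nonempty_subsingleton.1 hker).2
end

section
/- Let N ≥ 2. There exists no holomorphic function f on 𝔹_N with the property that for every continuous function h : b𝔹_N → ℂ there is a sequence (r_j) ⊆ [0,1) with r_j → 1 such that f(r_j x) → h(x) for every x ∈ b𝔹_N. More precisely, for any f ∈ 𝒪(𝔹_N), if for every continuous h on b𝔹_N some sequence of dilates f_{r_j} converges to h pointwise on b𝔹_N, a contradiction follows; indeed the pointwise convergence of dilates of a fixed f to every continuous h cannot even hold on a fixed nonempty open subset of b𝔹_N. -/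
open Set Filter Topology Metric MeasureTheory
open scoped ENNReal NNReal InnerProductSpace ComplexConjugate

/-!
Suppose that the dilates of `f` along some sequence `r_j → 1` are pointwise bounded on a relatively
open piece of the sphere. By Baire's theorem they are uniformly bounded on a cap around some point
`x` of that piece. In dimension at least two there is a complex line through `t • x` orthogonal
to `x`, and it meets the sphere of radius `r_j > t` within that dilated cap as soon as `t` is close
to `1`. The maximum principle on this line carries the bound to `f (t • x)`, so `f` is bounded
along the radius ending at `x`, and its dilates cannot converge there to a large constant.
-/

theorem exists_mem_eventually_forall_le_of_bddAbove {X ι : Type*} [TopologicalSpace X]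
    [BaireSpace X] {u : ι → X → ℝ} (hu : ∀ i, LowerSemicontinuous (u i)) {W : Set X}
    (hW : IsOpen W) (hne : W.Nonempty) (hbdd : ∀ x ∈ W, BddAbove (range fun i => u i x)) :
    ∃ x ∈ W, ∃ M : ℝ, ∀ᶠ y in 𝓝 x, ∀ i, u i y ≤ M := by
  have := hW.baireSpace
  have := hne.to_subtype
  let A (n : ℕ) : Set W := {y | ∀ i, u i y ≤ n}
  have hclosed (n : ℕ) : IsClosed (A n) := by
    simp only [A, ofPred_forall]
    exact isClosed_iInter fun i =>
      ((hu i).isClosed_preimage n).preimage continuous_subtype_val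
  have hcover : ⋃ n, A n = univ := by
    refine eq_univ_of_forall fun y => mem_iUnion.2 ?_
    obtain ⟨C, hC⟩ := hbdd y y.2
    obtain ⟨n, hn⟩ := exists_nat_ge C
    exact ⟨n, fun i => (hC ⟨i, rfl⟩).trans hn⟩
  obtain ⟨n, x, hx⟩ := nonempty_interior_of_iUnion_of_closed hclosed hcover
  refine ⟨x, x.2, n, ?_⟩
  rw [← map_nhds_subtype_coe_eq_nhds x.2 (hW.mem_nhds x.2)]
  exact mem_interior_iff_mem_nhds.1 hx

section InnerProductSpace

variable {𝕜 E : Type*} [RCLike 𝕜] [NormedAddCommGroup E] [InnerProductSpace 𝕜 E]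

theorem exists_norm_eq_one_inner_eq_zero (hE : 1 < Module.rank 𝕜 E) (x : E) :
    ∃ v : E, ‖v‖ = 1 ∧ inner 𝕜 x v = 0 := by
  have hspan : (𝕜 ∙ x)ᗮ ≠ ⊥ := by
    rw [Ne, Submodule.orthogonal_eq_bot_iff]
    intro htop
    refine hE.not_ge ?_
    rw [← rank_top 𝕜 E, ← htop]
    exact (rank_span_le _).trans (Cardinal.mk_singleton x).le
  have := Submodule.nontrivial_iff_ne_bot.2 hspan
  obtain ⟨v, hv⟩ := NormedSpace.sphere_nonempty_rclike 𝕜 (E := (𝕜 ∙ x)ᗮ) zero_le_one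
  exact ⟨v, mem_sphere_zero_iff_norm.1 hv, Submodule.mem_orthogonal_singleton_iff_inner_right.1 v.2⟩

theorem norm_add_smul_sq_of_inner_eq_zero {z v : E} (hv : ‖v‖ = 1) (hzv : inner 𝕜 z v = 0)
    (l : 𝕜) : ‖z + l • v‖ ^ 2 = ‖z‖ ^ 2 + ‖l‖ ^ 2 := by
  simp [norm_add_sq (𝕜 := 𝕜), inner_smul_right, hzv, norm_smul, hv]

end InnerProductSpace

theorem norm_sub_sq_of_inner_smul_sub_smul_eq_zero {E : Type*} [NormedAddCommGroup E]
    [InnerProductSpace ℝ E] {x y : E} (hx : ‖x‖ = 1) (hy : ‖y‖ = 1) {t r : ℝ} (ht : t ≠ 0)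
    (hr : r ≠ 0) (h : ⟪t • x, r • y - t • x⟫_ℝ = 0) : ‖y - x‖ ^ 2 = 2 * (1 - t / r) := by
  have hxx : ⟪x, x⟫_ℝ = 1 := by rw [real_inner_self_eq_norm_sq, hx, one_pow]
  have hyx : ⟪y, x⟫_ℝ = t / r := by
    rw [inner_sub_right, real_inner_smul_left, real_inner_smul_left, real_inner_smul_right,
      real_inner_smul_right, hxx, real_inner_comm, ← mul_sub] at h
    rw [eq_div_iff hr]
    linarith [(mul_eq_zero.1 h).resolve_left ht]
  rw [norm_sub_sq_real, hx, hy, hyx]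
  ring

theorem one_lt_rank_euclideanSpace (𝕜 ι : Type*) [RCLike 𝕜] [Finite ι] [Nontrivial ι] :
    1 < Module.rank 𝕜 (EuclideanSpace 𝕜 ι) := by
  have := Fintype.ofFinite ι
  rw [← Module.finrank_eq_rank, finrank_euclideanSpace]
  exact_mod_cast Fintype.one_lt_card (α := ι)

section Holomorphic

variable {E F : Type*} [NormedAddCommGroup E] [InnerProductSpace ℂ E]
  [NormedAddCommGroup F] [NormedSpace ℂ F] {f : E → F}

theorem norm_le_of_forall_mem_sphere_inner_sub_eq_zero (hE : 1 < Module.rank ℂ E) {r M : ℝ} {z : E}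
    (hf : DiffContOnCl ℂ f (ball 0 r)) (hz : z ∈ ball 0 r)
    (hM : ∀ w ∈ sphere (0 : E) r, ⟪z, w - z⟫_ℂ = 0 → ‖f w‖ ≤ M) : ‖f z‖ ≤ M := by
  obtain ⟨v, hv, hzv⟩ := exists_norm_eq_one_inner_eq_zero hE z
  rw [mem_ball_zero_iff] at hz
  have hr : 0 < r := (norm_nonneg z).trans_lt hz
  have hpos : 0 < r ^ 2 - ‖z‖ ^ 2 := sub_pos.2 (by gcongr)
  set ρ := √(r ^ 2 - ‖z‖ ^ 2)
  have hρ : 0 < ρ := Real.sqrt_pos.2 hpos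
  have hρ_sq : ρ ^ 2 = r ^ 2 - ‖z‖ ^ 2 := Real.sq_sqrt hpos.le
  have hnorm (l : ℂ) : ‖z + l • v‖ ^ 2 = r ^ 2 - ρ ^ 2 + ‖l‖ ^ 2 := by
    rw [norm_add_smul_sq_of_inner_eq_zero hv hzv, hρ_sq, sub_sub_cancel]
  have hmaps : MapsTo (fun l : ℂ => z + l • v) (ball 0 ρ) (ball 0 r) := by
    intro l hl
    rw [mem_ball_zero_iff] at hl ⊢
    refine lt_of_pow_lt_pow_left₀ 2 hr.le ?_
    have : ‖l‖ ^ 2 < ρ ^ 2 := by gcongr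
    linarith [hnorm l]
  have hslice : DiffContOnCl ℂ (fun l : ℂ => f (z + l • v)) (ball 0 ρ) :=
    hf.comp (Differentiable.diffContOnCl (by fun_prop)) hmaps
  have hbound : ∀ l ∈ frontier (ball (0 : ℂ) ρ), ‖f (z + l • v)‖ ≤ M := by
    intro l hl
    rw [frontier_ball _ hρ.ne', mem_sphere_zero_iff_norm] at hl
    refine hM _ ?_ ?_
    · rw [mem_sphere_zero_iff_norm, ← sq_eq_sq₀ (norm_nonneg _) hr.le, hnorm, hl, sub_add_cancel]
    · rw [add_sub_cancel_left, inner_smul_right, hzv, mul_zero]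
  simpa using Complex.norm_le_of_forall_mem_frontier_norm_le isBounded_ball hslice hbound
    (subset_closure (mem_ball_self hρ))

theorem norm_apply_smul_le_of_forall_cap (hE : 1 < Module.rank ℂ E)
    (hf : DifferentiableOn ℂ f (ball 0 1)) {x : E} (hx : ‖x‖ = 1) {δ M t r : ℝ} (hδ : 0 < δ)
    (ht : 0 < t) (htδ : 1 - δ ^ 2 / 2 < t) (htr : t < r) (hr : r < 1)
    (hM : ∀ y ∈ sphere (0 : E) 1 ∩ ball x δ, ‖f (r • y)‖ ≤ M) : ‖f (t • x)‖ ≤ M := by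
  have hr₀ : 0 < r := ht.trans htr
  have hf_r : DiffContOnCl ℂ f (ball 0 r) :=
    hf.diffContOnCl_ball (closedBall_subset_ball hr)
  have htx : t • x ∈ ball (0 : E) r := by
    rwa [mem_ball_zero_iff, norm_smul, hx, mul_one, Real.norm_of_nonneg ht.le]
  refine norm_le_of_forall_mem_sphere_inner_sub_eq_zero hE hf_r htx fun w hw hw_orth => ?_
  obtain ⟨y, hy, rfl⟩ : ∃ y, ‖y‖ = 1 ∧ r • y = w := by
    refine ⟨r⁻¹ • w, ?_, smul_inv_smul₀ hr₀.ne' w⟩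
    rw [norm_smul, mem_sphere_zero_iff_norm.1 hw, norm_inv, Real.norm_of_nonneg hr₀.le,
      inv_mul_cancel₀ hr₀.ne']
  refine hM y ⟨mem_sphere_zero_iff_norm.2 hy, ?_⟩
  let := InnerProductSpace.complexToReal (G := E)
  have h_orth : ⟪t • x, r • y - t • x⟫_ℝ = 0 := by
    rw [real_inner_eq_re_inner ℂ, hw_orth, map_zero]
  have ht_le_div : t ≤ t / r := le_div_self ht.le hr₀ hr.le
  rw [mem_ball, dist_eq_norm]
  refine lt_of_pow_lt_pow_left₀ 2 hδ.le ?_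
  rw [norm_sub_sq_of_inner_smul_sub_smul_eq_zero hx hy ht.ne' hr₀.ne' h_orth]
  linarith

variable [CompleteSpace E]

theorem exists_eventually_norm_radial_le (hE : 1 < Module.rank ℂ E)
    (hf : DifferentiableOn ℂ f (ball 0 1)) {W : Set E} (hW : IsOpen W)
    (hne : (W ∩ sphere 0 1).Nonempty) {r : ℕ → ℝ} (hr : ∀ j, r j ∈ Ico (0 : ℝ) 1)
    (hr_lim : Tendsto r atTop (𝓝 1))
    (hbdd : ∀ x ∈ W ∩ sphere 0 1, BddAbove (range fun j => ‖f (r j • x)‖)) :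
    ∃ x ∈ W ∩ sphere 0 1, ∃ M : ℝ, ∀ᶠ t in 𝓝[<] (1 : ℝ), ‖f (t • x)‖ ≤ M := by
  have hcont (j : ℕ) : Continuous fun y : sphere (0 : E) 1 => ‖f (r j • (y : E))‖ := by
    refine (hf.continuousOn.comp_continuous (by fun_prop) fun y => ?_).norm
    rw [mem_ball_zero_iff, norm_smul, norm_eq_of_mem_sphere, mul_one,
      Real.norm_of_nonneg (hr j).1]
    exact (hr j).2
  have : CompleteSpace (sphere (0 : E) 1) := isClosed_sphere.completeSpace_coe
  obtain ⟨z, hzW, hz⟩ := hne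
  obtain ⟨x, hxW, M, hM⟩ := exists_mem_eventually_forall_le_of_bddAbove
    (fun j => (hcont j).lowerSemicontinuous) (hW.preimage continuous_subtype_val)
    ⟨⟨z, hz⟩, hzW⟩ fun y hy => hbdd y ⟨hy, y.2⟩
  obtain ⟨δ, hδ, hcap⟩ := Metric.eventually_nhds_iff_ball.1 hM
  refine ⟨x, ⟨hxW, x.2⟩, M, ?_⟩
  have ht_near : max 0 (1 - δ ^ 2 / 2) < 1 := max_lt one_pos (sub_lt_self 1 (by positivity))
  filter_upwards [Ioo_mem_nhdsLT ht_near] with t ht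
  obtain ⟨ht_pos, htδ⟩ := max_lt_iff.1 ht.1
  obtain ⟨j, hj⟩ := (hr_lim.eventually_const_lt ht.2).exists
  exact norm_apply_smul_le_of_forall_cap hE hf (norm_eq_of_mem_sphere x) hδ ht_pos htδ hj (hr j).2
    fun y hy => hcap ⟨y, hy.1⟩ hy.2 j

theorem no_pointwise_universality_general [Nontrivial F] (hE : 1 < Module.rank ℂ E)
    (hf : DifferentiableOn ℂ f (ball 0 1)) {W : Set E} (hW : IsOpen W)
    (hne : (W ∩ sphere 0 1).Nonempty) :
    ¬ ∀ c : F, ∃ r : ℕ → ℝ, (∀ j, r j ∈ Ico (0 : ℝ) 1) ∧ Tendsto r atTop (𝓝 1) ∧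
      ∀ x ∈ W ∩ sphere 0 1, Tendsto (fun j => f (r j • x)) atTop (𝓝 c) := by
  intro H
  obtain ⟨r, hr, hr_lim, hf_zero⟩ := H 0
  obtain ⟨x, hx, M, hM⟩ := exists_eventually_norm_radial_le hE hf hW hne hr hr_lim
    fun x hx => (hf_zero x hx).norm.bddAbove_range
  obtain ⟨c, hc⟩ := NormedSpace.exists_lt_norm ℂ F M
  obtain ⟨s, hs, hs_lim, hf_c⟩ := H c
  have hs_left : Tendsto s atTop (𝓝[<] 1) :=
    tendsto_nhdsWithin_iff.2 ⟨hs_lim, .of_forall fun j => (hs j).2⟩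
  exact hc.not_ge (le_of_tendsto (hf_c x hx).norm (hs_left.eventually hM))

end Holomorphic

/-- For `N ≥ 2` there is no `f ∈ 𝒪(𝔹_N)` whose dilates `f_{r_j}(x) = f(r_j x)` converge
pointwise on `b𝔹_N` to every continuous function on `b𝔹_N` (along sequences
`(r_j) ⊆ [0,1)` tending to `1` depending on the target); moreover, for any fixed `f` such
pointwise convergence to every continuous target cannot even hold on a fixed nonempty
relatively open subset of `b𝔹_N`. -/
theorem no_pointwise_universality {N : ℕ} (hN : 2 ≤ N) :
    (¬ ∃ f : EN N → ℂ, DifferentiableOn ℂ f (Metric.ball 0 1) ∧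
      ∀ h : EN N → ℂ, ContinuousOn h (Metric.sphere 0 1) →
        ∃ r : ℕ → ℝ, (∀ j, r j ∈ Ico (0:ℝ) 1) ∧ Tendsto r atTop (𝓝 1) ∧
          ∀ x ∈ Metric.sphere (0:EN N) 1,
            Tendsto (fun j => f (r j • x)) atTop (𝓝 (h x))) ∧
    ∀ f : EN N → ℂ, DifferentiableOn ℂ f (Metric.ball 0 1) →
      ∀ W : Set (EN N), IsOpen W → (W ∩ Metric.sphere (0:EN N) 1).Nonempty →
        ¬ ∀ h : EN N → ℂ, ContinuousOn h (Metric.sphere 0 1) →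
          ∃ r : ℕ → ℝ, (∀ j, r j ∈ Ico (0:ℝ) 1) ∧ Tendsto r atTop (𝓝 1) ∧
            ∀ x ∈ W ∩ Metric.sphere (0:EN N) 1,
              Tendsto (fun j => f (r j • x)) atTop (𝓝 (h x)) := by
  have := Fin.nontrivial_iff_two_le.2 hN
  have hE : 1 < Module.rank ℂ (EN N) := one_lt_rank_euclideanSpace ℂ (Fin N)
  exact ⟨fun ⟨f, hf, H⟩ => no_pointwise_universality_general hE hf isOpen_univ (by simp)
      fun c => by simpa only [univ_inter] using H (fun _ => c) continuousOn_const,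
    fun f hf W hW hne H => no_pointwise_universality_general hE hf hW hne
      fun c => H (fun _ => c) continuousOn_const⟩
end
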